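/- Let φ : 𝔻³ → 𝔻³ be holomorphic and C²-smooth on the closed tridisc. Then the composition operator C_φ is bounded on the classical Bergman space A²(𝔻³) if and only if φ satisfies both: (1) for every ζ ∈ 𝕋³ with φ(ζ) ∈ 𝕋³, the 3×3 complex Jacobian matrix d_ζφ is invertible; and (2) for every pair 1 ≤ i_1 < i_2 ≤ 3 and every ζ ∈ 𝕋³ with (φ_{i_1}(ζ), φ_{i_2}(ζ)) ∈ 𝕋², either (a) the complex gradients ∇φ_{i_1}(ζ) and ∇φ_{i_2}(ζ) are linearly independent over ℂ, or (b) ∂φ_{i_k}/∂z_j(ζ) ≠ 0 for all j = 1,2,3 and k = 1,2. -/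

import Mathlib

open MeasureTheory Metric Set ENNReal

noncomputable section

/-- The open unit polydisc in `ℂⁿ`. -/
def polydisc (n : ℕ) : Set (Fin n → ℂ) := {z | ∀ j, ‖z j‖ < 1}

/-- The closed unit polydisc in `ℂⁿ`. -/
def closedPolydisc (n : ℕ) : Set (Fin n → ℂ) := {z | ∀ j, ‖z j‖ ≤ 1}

/-- The distinguished boundary (torus) of the polydisc. -/
def torus (n : ℕ) : Set (Fin n → ℂ) := {z | ∀ j, ‖z j‖ = 1}

/-- The weighted Bergman measure `V_β` on the polydisc: the product of the measures
`dA_β(z) = (β+1)(1-|z|²)^β dA(z)`, where `dA` is normalized area measure on the unit disc. -/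
def Vbeta (n : ℕ) (β : ℝ) : Measure (Fin n → ℂ) :=
  (volume.restrict (polydisc n)).withDensity
    (fun z => ENNReal.ofReal (∏ j, ((β + 1) * (1 - ‖z j‖ ^ 2) ^ β / Real.pi)))

/-- The `(i,j)` entry `∂Φ_i/∂z_j(ζ)` of the complex Jacobian matrix of `Φ` at `ζ`
(computed via the derivative of the extension to the closed polydisc). -/
def jacEntry (n : ℕ) (Φ : (Fin n → ℂ) → (Fin n → ℂ)) (ζ : Fin n → ℂ) (i j : Fin n) : ℂ :=
  fderivWithin ℝ Φ (closedPolydisc n) ζ (Pi.single j 1) i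

/-- The composition operator `C_Φ` is bounded on the weighted Bergman space `A²_β(𝔻ⁿ)`. -/
def bddBergman (n : ℕ) (β : ℝ) (Φ : (Fin n → ℂ) → (Fin n → ℂ)) : Prop :=
  ∃ C > (0:ℝ), ∀ f : (Fin n → ℂ) → ℂ, DifferentiableOn ℂ f (polydisc n) →
    ∫⁻ z, ENNReal.ofReal (‖f (Φ z)‖ ^ 2) ∂(Vbeta n β) ≤
      ENNReal.ofReal C * ∫⁻ z, ENNReal.ofReal (‖f z‖ ^ 2) ∂(Vbeta n β)

/-!
By the submean value property and Tonelli, `C_φ` is bounded on `A²` as soon as the preimage under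
`φ` of each Carleson box has volume at most a constant times that of the box. By compactness this
is a local question at each boundary point. If the rows of the Jacobian belonging to the unimodular
coordinates of `φ` are linearly independent, they extend to an invertible matrix, and `φ` composed
with a projection is locally a bi-Lipschitz chart that pulls boxes back to comparable boxes. If
instead these rows have no zero entry, then `1 - |x_l|` is dominated by `1 - |φ_i(x)|` for *every*
`l`, which costs `n + 1` powers of the box size and pays for `(n + 1) / 2` sides.

The link between the torus and the boundary of the polydisc is the Julia-Carathéodory identity
`∂_j φ_i(z) z_j = φ_i(z) |∂_j φ_i(z)|` at points with `|φ_i(z)| = 1`, together with the rigidity it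
entails: where `∂_j φ_i` vanishes, `φ_i` and its gradient do not depend on `z_j` at all. It also
gives necessity. Up to unimodular factors the active rows are real, so a linear dependence produces
a *real* vector `v` with `∑ j, |∂_j φ_i(ζ)| v_j = 0`. Moving `ζ` along the torus by multiples of
`δ v` moves `φ_i` only by `O(δ)`; the map therefore sends arbitrarily many disjoint polydiscs of
radius `δ` to where a suitable product of Bergman kernels is large.
-/

open Filter Topology Matrix

/-! ### Functions on the unit disc -/

section UnitDisc

variable {g : ℂ → ℂ}

/-- A form of the Schwarz–Pick inequality, obtained from the Borel–Carathéodory inequality for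
`-(1 - c g)⁻¹`, where `c` is unimodular with `c * g z = ‖g z‖`. -/
lemma one_sub_norm_mul_one_sub_norm_le (hd : DifferentiableOn ℂ g (ball 0 1))
    (hb : ∀ z ∈ ball (0 : ℂ) 1, ‖g z‖ < 1) {z : ℂ} (hz : z ∈ ball (0 : ℂ) 1) :
    (1 - ‖z‖) * (1 - ‖g 0‖) ≤ 4 * (1 - ‖g z‖) := by
  obtain ⟨c, hc, hcz⟩ : ∃ c : ℂ, ‖c‖ = 1 ∧ ‖g z‖ = c * g z := Complex.exists_norm_eq_mul_self _
  have hre (w) (hw : w ∈ ball (0 : ℂ) 1) : 0 < (1 - c * g w).re := by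
    have hlt : ‖c * g w‖ < 1 := by rw [norm_mul, hc, one_mul]; exact hb w hw
    simpa using (Complex.re_le_norm _).trans_lt hlt
  have hne (w) (hw : w ∈ ball (0 : ℂ) 1) : 1 - c * g w ≠ 0 := fun h ↦ by
    simpa [h] using hre w hw
  set M := ‖1 - c * g 0‖
  have hM : 0 < M := norm_pos_iff.2 (hne 0 (by simp))
  have hBC := Complex.borelCaratheodory (f := fun w ↦ -(1 - c * g w)⁻¹) (inv_pos.2 hM)
    (((hd.const_mul c).const_sub 1).inv hne).neg
    (fun w hw ↦ by
      have : (-(1 - c * g w)⁻¹).re ≤ 0 := by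
        rw [Complex.neg_re, Complex.inv_re, neg_nonpos]
        exact div_nonneg (hre w hw).le (Complex.normSq_nonneg _)
      exact this.trans (inv_pos.2 hM).le)
    one_pos hz
  have hz1 : 0 < 1 - ‖z‖ := by simpa using hz
  have hgz1 : 0 < 1 - ‖g z‖ := sub_pos.2 (hb z hz)
  have hgz : ‖1 - c * g z‖ = 1 - ‖g z‖ := by
    rw [← hcz, ← Complex.ofReal_one, ← Complex.ofReal_sub, Complex.norm_real,
      Real.norm_of_nonneg hgz1.le]
  have hg0 : 1 - ‖g 0‖ ≤ M := by simpa [hc] using norm_sub_norm_le 1 (c * g 0)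
  have hbound : (1 - ‖g z‖)⁻¹ ≤ 4 * M⁻¹ / (1 - ‖z‖) := by
    simp only [norm_neg, norm_inv, hgz] at hBC
    refine hBC.trans ?_
    rw [← add_div]
    gcongr
    nlinarith [inv_pos.2 hM]
  field_simp at hbound
  nlinarith

lemma eqOn_closedBall_of_norm_eq_one (hg : DiffContOnCl ℂ g (ball 0 1))
    (hb : ∀ z ∈ closedBall (0 : ℂ) 1, ‖g z‖ ≤ 1) {z₀ : ℂ} (hz₀ : z₀ ∈ ball (0 : ℂ) 1)
    (h₀ : ‖g z₀‖ = 1) : ∀ z ∈ closedBall (0 : ℂ) 1, g z = g z₀ := by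
  rw [← closure_ball 0 one_ne_zero]
  refine Complex.eqOn_closure_of_isPreconnected_of_isMaxOn_norm
    (convex_ball _ _).isPreconnected isOpen_ball hg hz₀ fun z hz ↦ ?_
  simpa only [mem_ofPred_eq, Function.comp, h₀] using hb z (ball_subset_closedBall hz)

lemma exists_one_sub_norm_le_of_hasDerivWithinAt_zero {ζ : ℂ} (hζ : ‖ζ‖ = 1) (hgζ : ‖g ζ‖ = 1)
    (hder : HasDerivWithinAt g 0 (closedBall 0 1) ζ) {ε : ℝ} (hε : 0 < ε) :
    ∃ z ∈ ball (0 : ℂ) 1, 1 - ‖g z‖ ≤ ε * (1 - ‖z‖) := by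
  have hradial : Tendsto (fun r : ℝ ↦ r • ζ) (𝓝[<] 1) (𝓝[closedBall 0 1] ζ) := by
    refine tendsto_nhdsWithin_iff.2 ⟨?_, ?_⟩
    · exact ((by fun_prop : Continuous fun r : ℝ ↦ r • ζ).tendsto' 1 ζ (one_smul ℝ ζ)).mono_left
        nhdsWithin_le_nhds
    · filter_upwards [Ioo_mem_nhdsLT zero_lt_one] with r hr
      simpa [norm_smul, hζ, abs_of_pos hr.1] using hr.2.le
  obtain ⟨r, hr, hr0, hr1⟩ := ((hradial.eventually
    ((hasDerivWithinAt_iff_isLittleO.1 hder).def hε)).and (Ioo_mem_nhdsLT zero_lt_one)).exists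
  have hnorm : ‖r • ζ‖ = r := by rw [norm_smul, hζ, mul_one, Real.norm_of_nonneg hr0.le]
  have hsub : ‖r • ζ - ζ‖ = 1 - r := by
    nth_rw 2 [← one_smul ℝ ζ]
    rw [← sub_smul, norm_smul, hζ, mul_one, norm_sub_rev, Real.norm_of_nonneg (by linarith)]
  refine ⟨r • ζ, by simpa only [mem_ball_zero_iff, hnorm] using hr1, ?_⟩
  rw [smul_zero, sub_zero, hsub] at hr
  rw [hnorm]
  linarith [norm_sub_norm_le (g ζ) (g (r • ζ)), norm_sub_rev (g ζ) (g (r • ζ))]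

/-- The Hopf lemma. -/
lemma eqOn_closedBall_of_hasDerivWithinAt_zero (hg : DiffContOnCl ℂ g (ball 0 1))
    (hb : ∀ z ∈ closedBall (0 : ℂ) 1, ‖g z‖ ≤ 1) {ζ : ℂ} (hζ : ‖ζ‖ = 1) (hgζ : ‖g ζ‖ = 1)
    (hder : HasDerivWithinAt g 0 (closedBall 0 1) ζ) :
    ∀ z ∈ closedBall (0 : ℂ) 1, g z = g ζ := by
  by_cases h : ∃ z₀ ∈ ball (0 : ℂ) 1, ‖g z₀‖ = 1
  · obtain ⟨z₀, hz₀, h₀⟩ := h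
    have hconst := eqOn_closedBall_of_norm_eq_one hg hb hz₀ h₀
    intro z hz
    rw [hconst z hz, hconst ζ (by simp [hζ])]
  have hb' (z) (hz : z ∈ ball (0 : ℂ) 1) : ‖g z‖ < 1 :=
    (hb z (ball_subset_closedBall hz)).lt_of_ne fun h₁ ↦ h ⟨z, hz, h₁⟩
  have h0 : 0 < 1 - ‖g 0‖ := sub_pos.2 (hb' 0 (by simp))
  obtain ⟨z, hz, hupper⟩ :=
    exists_one_sub_norm_le_of_hasDerivWithinAt_zero hζ hgζ hder
      (ε := (1 - ‖g 0‖) / 8) (by positivity)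
  have hlower := one_sub_norm_mul_one_sub_norm_le hg.differentiableOn hb' hz
  have hz1 : 0 < 1 - ‖z‖ := by simpa using hz
  nlinarith

end UnitDisc

/-! ### Polydiscs and the complex Jacobian -/

section Polydisc

variable {n : ℕ}

lemma polydisc_eq_ball : polydisc n = ball 0 1 := by
  ext z
  simp [polydisc, pi_norm_lt_iff]

lemma closedPolydisc_eq_closedBall : closedPolydisc n = closedBall 0 1 := by
  ext z
  simp [closedPolydisc, pi_norm_le_iff_of_nonneg]

lemma isOpen_polydisc : IsOpen (polydisc n) := polydisc_eq_ball ▸ isOpen_ball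

lemma closure_polydisc : closure (polydisc n) = closedPolydisc n := by
  rw [polydisc_eq_ball, closedPolydisc_eq_closedBall, closure_ball _ one_ne_zero]

lemma polydisc_subset_closedPolydisc : polydisc n ⊆ closedPolydisc n :=
  closure_polydisc (n := n) ▸ subset_closure

lemma torus_subset_closedPolydisc : torus n ⊆ closedPolydisc n := fun _ hz j ↦ (hz j).le

lemma isCompact_closedPolydisc : IsCompact (closedPolydisc n) :=
  closedPolydisc_eq_closedBall (n := n) ▸ isCompact_closedBall _ _

lemma convex_closedPolydisc : Convex ℝ (closedPolydisc n) :=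
  closedPolydisc_eq_closedBall (n := n) ▸ convex_closedBall _ _

lemma uniqueDiffOn_closedPolydisc : UniqueDiffOn ℝ (closedPolydisc n) := by
  refine uniqueDiffOn_convex convex_closedPolydisc ?_
  rw [closedPolydisc_eq_closedBall, interior_closedBall _ one_ne_zero]
  exact ⟨0, by simp⟩

lemma update_mem_closedPolydisc {z : Fin n → ℂ} (hz : z ∈ closedPolydisc n) (j : Fin n) {l : ℂ}
    (hl : ‖l‖ ≤ 1) : Function.update z j l ∈ closedPolydisc n := by
  intro k
  rcases eq_or_ne k j with rfl | hk
  · simpa using hl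
  · simpa [hk] using hz k

lemma update_sub_eq_single (z : Fin n → ℂ) (j : Fin n) (l : ℂ) :
    Function.update z j l - z = Pi.single j (l - z j) := by
  rw [← Function.update_eq_self j z, Function.update_idem, ← Function.update_sub, sub_self,
    Function.update_self, Pi.single]

end Polydisc

/-- The complex Jacobian matrix, assembled from the entries `jacEntry`. -/
def jacobian {n : ℕ} (φ : (Fin n → ℂ) → Fin n → ℂ) (z : Fin n → ℂ) : Matrix (Fin n) (Fin n) ℂ :=
  Matrix.of (jacEntry n φ z)

lemma jacobian_mulVec_apply {n : ℕ} (φ : (Fin n → ℂ) → Fin n → ℂ) (z v : Fin n → ℂ) (i : Fin n) :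
    (jacobian φ z *ᵥ v) i = ∑ j, jacEntry n φ z i j * v j :=
  rfl

lemma jacobian_mulVec_single_apply {n : ℕ} (φ : (Fin n → ℂ) → Fin n → ℂ) (z : Fin n → ℂ)
    (i k : Fin n) (c : ℂ) : (jacobian φ z *ᵥ Pi.single k c) i = jacEntry n φ z i k * c := by
  rw [mulVec_single]
  rfl

/-- Holomorphic self-maps of the polydisc which are continuously differentiable up to the boundary.
As in `jacEntry`, the boundary values are those of the map itself on the closed polydisc. -/
structure IsC1SelfMap {n : ℕ} (φ : (Fin n → ℂ) → Fin n → ℂ) : Prop where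
  differentiableOn : DifferentiableOn ℂ φ (polydisc n)
  contDiffOn : ContDiffOn ℝ 1 φ (closedPolydisc n)
  mapsTo : MapsTo φ (polydisc n) (polydisc n)

namespace IsC1SelfMap

variable {n : ℕ} {φ : (Fin n → ℂ) → Fin n → ℂ}

lemma continuousOn (h : IsC1SelfMap φ) : ContinuousOn φ (closedPolydisc n) :=
  h.contDiffOn.continuousOn

lemma mapsTo_closedPolydisc (h : IsC1SelfMap φ) :
    MapsTo φ (closedPolydisc n) (closedPolydisc n) := by
  rw [← closure_polydisc]
  exact h.mapsTo.closure_of_continuousOn (closure_polydisc (n := n) ▸ h.continuousOn)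

lemma fderivWithin_smul (h : IsC1SelfMap φ) {z : Fin n → ℂ} (hz : z ∈ closedPolydisc n) (c : ℂ)
    (v : Fin n → ℂ) : fderivWithin ℝ φ (closedPolydisc n) z (c • v) =
      c • fderivWithin ℝ φ (closedPolydisc n) z v := by
  have hcont (w : Fin n → ℂ) :
      ContinuousOn (fun y ↦ fderivWithin ℝ φ (closedPolydisc n) y w) (closedPolydisc n) :=
    (h.contDiffOn.continuousOn_fderivWithin uniqueDiffOn_closedPolydisc le_rfl).clm_apply
      continuousOn_const
  have hinterior : EqOn (fun y ↦ fderivWithin ℝ φ (closedPolydisc n) y (c • v))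
      (fun y ↦ c • fderivWithin ℝ φ (closedPolydisc n) y v) (polydisc n) := by
    intro y hy
    have hnhds : closedPolydisc n ∈ 𝓝 y :=
      mem_of_superset (isOpen_polydisc.mem_nhds hy) polydisc_subset_closedPolydisc
    have hdiff := (h.differentiableOn y hy).differentiableAt (isOpen_polydisc.mem_nhds hy)
    simp only [fderivWithin_of_mem_nhds hnhds, hdiff.fderiv_restrictScalars ℝ,
      ContinuousLinearMap.coe_restrictScalars', map_smul]
  exact hinterior.of_subset_closure (hcont _) ((hcont _).const_smul c)
    polydisc_subset_closedPolydisc closure_polydisc.ge hz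

lemma fderivWithin_apply (h : IsC1SelfMap φ) {z : Fin n → ℂ} (hz : z ∈ closedPolydisc n)
    (v : Fin n → ℂ) : fderivWithin ℝ φ (closedPolydisc n) z v = jacobian φ z *ᵥ v := by
  ext i
  nth_rw 1 [pi_eq_sum_univ' v]
  simp only [map_sum, h.fderivWithin_smul hz, Finset.sum_apply, Pi.smul_apply, smul_eq_mul,
    mulVec, dotProduct, jacobian, Matrix.of_apply, jacEntry, mul_comm]

lemma hasFDerivWithinAt (h : IsC1SelfMap φ) {z : Fin n → ℂ} (hz : z ∈ closedPolydisc n) :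
    HasFDerivWithinAt φ (jacobian φ z).toLin'.toContinuousLinearMap (closedPolydisc n) z :=
  (h.contDiffOn.differentiableOn one_ne_zero z hz).hasFDerivWithinAt.of_restrictScalars ℝ <|
    ContinuousLinearMap.ext fun v ↦ (h.fderivWithin_apply hz v).symm

lemma continuousOn_jacobian (h : IsC1SelfMap φ) :
    ContinuousOn (jacobian φ) (closedPolydisc n) := by
  refine continuousOn_pi.2 fun i ↦ continuousOn_pi.2 fun j ↦ ?_
  exact (continuous_apply i).comp_continuousOn
    ((h.contDiffOn.continuousOn_fderivWithin uniqueDiffOn_closedPolydisc le_rfl).clm_apply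
      continuousOn_const)

lemma continuousOn_jacEntry (h : IsC1SelfMap φ) (i j : Fin n) :
    ContinuousOn (fun z ↦ jacEntry n φ z i j) (closedPolydisc n) :=
  continuousOn_pi.1 (continuousOn_pi.1 h.continuousOn_jacobian i) j

lemma exists_approximatesLinearOn (h : IsC1SelfMap φ) {ε : NNReal} (hε : 0 < ε) :
    ∃ δ > 0, ∀ z ∈ closedPolydisc n,
      ApproximatesLinearOn φ (jacobian φ z).toLin'.toContinuousLinearMap
        (closedPolydisc n ∩ ball z δ) ε := by
  let T : Matrix (Fin n) (Fin n) ℂ →ₗ[ℂ] (Fin n → ℂ) →L[ℂ] Fin n → ℂ :=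
    LinearMap.toContinuousLinearMap.toLinearMap ∘ₗ Matrix.toLin'.toLinearMap
  have huc : UniformContinuousOn (fun z ↦ T (jacobian φ z)) (closedPolydisc n) :=
    isCompact_closedPolydisc.uniformContinuousOn_of_continuous
      (T.continuous_of_finiteDimensional.comp_continuousOn h.continuousOn_jacobian)
  obtain ⟨δ, hδ, H⟩ := Metric.uniformContinuousOn_iff.1 huc ε hε
  refine ⟨δ, hδ, fun z hz x hx y hy ↦ ?_⟩
  have hconvex := convex_closedPolydisc.inter (convex_ball z δ)
  refine hconvex.norm_image_sub_le_of_norm_hasFDerivWithin_le'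
    (fun w hw ↦ (h.hasFDerivWithinAt hw.1).mono inter_subset_left) (fun w hw ↦ ?_) hy hx
  rw [← dist_eq_norm]
  exact (H w hw.1 z hz hw.2).le

lemma exists_norm_sub_sub_mulVec_le (h : IsC1SelfMap φ) {ε : ℝ} (hε : 0 < ε) :
    ∃ δ > 0, ∀ x ∈ closedPolydisc n, ∀ y ∈ closedPolydisc n, ‖y - x‖ < δ →
      ∀ i, ‖φ y i - φ x i - (jacobian φ x *ᵥ (y - x)) i‖ ≤ ε * ‖y - x‖ := by
  obtain ⟨δ, hδ, H⟩ := h.exists_approximatesLinearOn (ε := ⟨ε, hε.le⟩) hε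
  refine ⟨δ, hδ, fun x hx y hy hxy i ↦ ?_⟩
  exact (norm_le_pi_norm (φ y - φ x - jacobian φ x *ᵥ (y - x)) i).trans
    (H x hx y ⟨hy, by rwa [mem_ball_iff_norm]⟩ x ⟨hx, mem_ball_self hδ⟩)

lemma hasDerivWithinAt_comp (h : IsC1SelfMap φ) {γ : ℂ → Fin n → ℂ} {s : Set ℂ} {l : ℂ}
    {v : Fin n → ℂ} (hγ : HasDerivWithinAt γ v s l) (hm : MapsTo γ s (closedPolydisc n))
    (hl : l ∈ s) (i : Fin n) :
    HasDerivWithinAt (fun m ↦ φ (γ m) i) ((jacobian φ (γ l) *ᵥ v) i) s l :=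
  hasDerivWithinAt_pi.1 ((h.hasFDerivWithinAt (hm hl)).comp_hasDerivWithinAt l hγ hm) i

lemma diffContOnCl_comp (h : IsC1SelfMap φ) {γ : ℂ → Fin n → ℂ} (hγ : Differentiable ℂ γ)
    (hm : MapsTo γ (closedBall 0 1) (closedPolydisc n)) (i : Fin n) :
    DiffContOnCl ℂ (fun m ↦ φ (γ m) i) (ball 0 1) := by
  have hd : DifferentiableOn ℂ (fun m ↦ φ (γ m) i) (closedBall 0 1) := fun l hl ↦
    (h.hasDerivWithinAt_comp (hγ l).hasDerivAt.hasDerivWithinAt hm hl i).differentiableWithinAt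
  exact (closure_ball (0 : ℂ) one_ne_zero ▸ hd).diffContOnCl

end IsC1SelfMap

/-! ### Boundary rigidity -/

namespace IsC1SelfMap

variable {n : ℕ} {φ : (Fin n → ℂ) → Fin n → ℂ} {z : Fin n → ℂ} {i j k : Fin n}

lemma re_conj_mul_mulVec_sub_nonpos (h : IsC1SelfMap φ) (hz : z ∈ closedPolydisc n)
    (hi : ‖φ z i‖ = 1) {y : Fin n → ℂ} (hy : y ∈ closedPolydisc n) :
    (starRingEnd ℂ (φ z i) * (jacobian φ z *ᵥ (y - z)) i).re ≤ 0 := by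
  have hmax : IsLocalMaxOn (fun x ↦ (starRingEnd ℂ (φ z i) * φ x i).re) (closedPolydisc n) z := by
    filter_upwards [self_mem_nhdsWithin] with x hx
    calc (starRingEnd ℂ (φ z i) * φ x i).re ≤ ‖starRingEnd ℂ (φ z i) * φ x i‖ :=
          Complex.re_le_norm _
      _ ≤ 1 := by
        rw [norm_mul, RCLike.norm_conj, hi, one_mul]; exact h.mapsTo_closedPolydisc hx i
      _ = (starRingEnd ℂ (φ z i) * φ z i).re := by
        rw [← Complex.normSq_eq_conj_mul_self, Complex.normSq_eq_norm_sq, hi]; simp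
  have hderiv := Complex.reCLM.hasFDerivAt.comp_hasFDerivWithinAt z
    (((hasFDerivWithinAt_pi'.1 (h.hasFDerivWithinAt hz) i).const_mul
      (starRingEnd ℂ (φ z i))).restrictScalars ℝ)
  exact hmax.hasFDerivWithinAt_nonpos hderiv <|
    sub_mem_posTangentConeAt_of_segment_subset (convex_closedPolydisc.segment_subset hz hy)

/-- The Julia–Carathéodory relation: testing the first-order condition on `update z k c` with the
best unimodular `c` forces equality in `Re (conj (φ z i) * J * z k) ≤ ‖J‖`. -/
lemma jacEntry_mul_eq (h : IsC1SelfMap φ) (hz : z ∈ closedPolydisc n) (hi : ‖φ z i‖ = 1)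
    (k : Fin n) : jacEntry n φ z i k * z k = φ z i * ‖jacEntry n φ z i k‖ := by
  set A := starRingEnd ℂ (φ z i) * jacEntry n φ z i k with hA
  have hnorm : ‖A‖ = ‖jacEntry n φ z i k‖ := by rw [hA, norm_mul, RCLike.norm_conj, hi, one_mul]
  obtain ⟨c, hc, hcA⟩ := Complex.exists_norm_eq_mul_self A
  have hnonpos := h.re_conj_mul_mulVec_sub_nonpos hz hi (update_mem_closedPolydisc hz k hc.le)
  rw [update_sub_eq_single, jacobian_mulVec_single_apply, ← mul_assoc, ← hA, mul_sub, mul_comm,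
    ← hcA, Complex.sub_re, Complex.ofReal_re, sub_nonpos] at hnonpos
  have hle : ‖A * z k‖ ≤ ‖A‖ := by
    rw [norm_mul]; exact mul_le_of_le_one_right (norm_nonneg _) (hz k)
  have hre : (A * z k).re = ‖A * z k‖ := (Complex.re_le_norm _).antisymm (hle.trans hnonpos)
  have hAz : A * z k = ‖A‖ := by
    rw [Complex.eq_coe_norm_of_nonneg (Complex.re_eq_norm.1 hre),
      hle.antisymm (hnonpos.trans hre.le)]
  rw [← hnorm, ← hAz, hA, mul_assoc, ← mul_assoc (φ z i), Complex.mul_conj,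
    Complex.normSq_eq_norm_sq, hi, one_pow, Complex.ofReal_one, one_mul]

lemma jacEntry_eq_zero_of_norm_lt_one (h : IsC1SelfMap φ) (hz : z ∈ closedPolydisc n)
    (hi : ‖φ z i‖ = 1) (hk : ‖z k‖ < 1) : jacEntry n φ z i k = 0 := by
  have hnorm := congrArg norm (h.jacEntry_mul_eq hz hi k)
  rw [norm_mul, norm_mul, hi, one_mul, Complex.norm_real, norm_norm] at hnorm
  by_contra hne
  exact hk.ne ((mul_eq_left₀ (norm_ne_zero_iff.2 hne)).1 hnorm)

lemma exists_jacEntry_ne_zero (h : IsC1SelfMap φ) (hz : z ∈ closedPolydisc n)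
    (hi : ‖φ z i‖ = 1) : ∃ j, jacEntry n φ z i j ≠ 0 := by
  by_contra! hJ
  have hm : MapsTo (fun l : ℂ ↦ l • z) (closedBall 0 1) (closedPolydisc n) := fun l hl k ↦ by
    change ‖l * z k‖ ≤ 1
    rw [norm_mul]
    exact mul_le_one₀ (mem_closedBall_zero_iff.1 hl) (norm_nonneg _) (hz k)
  have hself : φ ((1 : ℂ) • z) i = φ z i := by rw [one_smul]
  have hder := h.hasDerivWithinAt_comp ((hasDerivAt_id (1 : ℂ)).smul_const z).hasDerivWithinAt hm
    (by simp) i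
  have hrow : (jacobian φ ((1 : ℂ) • z) *ᵥ ((1 : ℂ) • z)) i = 0 := by
    simp only [one_smul, jacobian_mulVec_apply, hJ, zero_mul, Finset.sum_const_zero]
  have hconst := eqOn_closedBall_of_hasDerivWithinAt_zero
    (h.diffContOnCl_comp (differentiable_id.smul_const z) hm i)
    (fun l hl ↦ h.mapsTo_closedPolydisc (hm hl) i) norm_one (by simpa using hi)
    (by rwa [id, hrow] at hder) 0 (by simp)
  have hzero : ‖φ 0 i‖ < 1 := h.mapsTo (fun k ↦ by simp) i
  rw [zero_smul, hself] at hconst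
  exact hzero.ne (hconst ▸ hi)

lemma update_apply_eq (h : IsC1SelfMap φ) (hz : z ∈ closedPolydisc n)
    (hi : ‖φ z i‖ = 1) (hJ : jacEntry n φ z i j = 0) {l : ℂ} (hl : ‖l‖ ≤ 1) :
    φ (Function.update z j l) i = φ z i := by
  have hγ : Differentiable ℂ (Function.update z j) := fun l ↦
    (hasDerivAt_update z j l).differentiableAt
  have hm : MapsTo (Function.update z j) (closedBall 0 1) (closedPolydisc n) := fun l hl ↦
    update_mem_closedPolydisc hz j (mem_closedBall_zero_iff.1 hl)
  have hdiff := h.diffContOnCl_comp hγ hm i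
  have hbound (l) (hl : l ∈ closedBall (0 : ℂ) 1) : ‖φ (Function.update z j l) i‖ ≤ 1 :=
    h.mapsTo_closedPolydisc (hm hl) i
  have hself : φ (Function.update z j (z j)) i = φ z i := by rw [Function.update_eq_self]
  rw [← hself] at hi ⊢
  rcases (hz j).lt_or_eq with hlt | heq
  · exact eqOn_closedBall_of_norm_eq_one hdiff hbound (by simpa using hlt) hi l (by simpa using hl)
  · refine eqOn_closedBall_of_hasDerivWithinAt_zero hdiff hbound heq hi ?_ l (by simpa using hl)
    have hder := h.hasDerivWithinAt_comp (hasDerivAt_update z j (z j)).hasDerivWithinAt hm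
      (by simpa using hz j) i
    rwa [Function.update_eq_self, jacobian_mulVec_single_apply, hJ, zero_mul] at hder

lemma differentiableOn_mulVec_comp (h : IsC1SelfMap φ) {γ : ℂ → Fin n → ℂ} {v : Fin n → ℂ}
    {s : Set ℂ} (hs : IsOpen s) (hγ : DifferentiableOn ℂ γ s) (hm : MapsTo γ s (closedPolydisc n))
    (hv : ∀ l ∈ s, γ l + v ∈ closedPolydisc n) (i : Fin n) :
    DifferentiableOn ℂ (fun l ↦ (jacobian φ (γ l) *ᵥ v) i) s := by
  have hmt {t : ℝ} (ht : t ∈ Ioo 0 1) : MapsTo (fun l ↦ γ l + t • v) s (closedPolydisc n) :=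
    fun l hl ↦ by simpa using
      convex_closedPolydisc.add_smul_sub_mem (hm hl) (hv l hl) (Ioo_subset_Icc_self ht)
  have hquot : ∀ᶠ t : ℝ in 𝓝[>] 0, DifferentiableOn ℂ
      (fun l ↦ (φ (γ l + t • v) i - φ (γ l) i) / t) s := by
    filter_upwards [Ioo_mem_nhdsGT zero_lt_one] with t ht l hl
    have hγl := (hγ l hl).hasDerivWithinAt
    exact ((h.hasDerivWithinAt_comp (hγl.add_const _) (hmt ht) hl i).sub
      (h.hasDerivWithinAt_comp hγl hm hl i)).differentiableWithinAt.div_const _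
  have hlim : TendstoUniformlyOn (fun (t : ℝ) l ↦ (φ (γ l + t • v) i - φ (γ l) i) / t)
      (fun l ↦ (jacobian φ (γ l) *ᵥ v) i) (𝓝[>] 0) s := by
    refine Metric.tendstoUniformlyOn_iff.2 fun ε hε ↦ ?_
    obtain ⟨δ, hδ, H⟩ := h.exists_norm_sub_sub_mulVec_le (ε := ε / (‖v‖ + 1)) (by positivity)
    filter_upwards [Ioo_mem_nhdsGT zero_lt_one,
      Ioo_mem_nhdsGT (by positivity : 0 < δ / (‖v‖ + 1))] with t ht ⟨_, htδ⟩ l hl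
    have hstep : ‖γ l + t • v - γ l‖ = t * ‖v‖ := by
      rw [add_sub_cancel_left, norm_smul, Real.norm_of_nonneg ht.1.le]
    rw [lt_div_iff₀ (by positivity)] at htδ
    have hexp := H _ (hm hl) _ (hmt ht hl) (by rw [hstep]; linarith [ht.1]) i
    rw [hstep, add_sub_cancel_left, mulVec_smul, Pi.smul_apply, Complex.real_smul] at hexp
    have ht0 : (t : ℂ) ≠ 0 := Complex.ofReal_ne_zero.2 ht.1.ne'
    rw [dist_comm, dist_eq_norm, div_sub' ht0, norm_div, Complex.norm_real,
      Real.norm_of_nonneg ht.1.le, div_lt_iff₀ ht.1]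
    refine hexp.trans_lt ?_
    rw [div_mul_eq_mul_div, div_lt_iff₀ (by positivity)]
    nlinarith [mul_pos hε ht.1]
  exact hlim.tendstoLocallyUniformlyOn.differentiableOn hquot hs

lemma exists_forall_jacEntry_update_eq (h : IsC1SelfMap φ) (hz : z ∈ closedPolydisc n)
    (hi : ‖φ z i‖ = 1) (hJ : jacEntry n φ z i j = 0) (k : Fin n) :
    ∃ c, ∀ l ∈ ball (0 : ℂ) 1, jacEntry n φ (Function.update z j l) i k = c := by
  have hm : MapsTo (Function.update z j) (ball 0 1) (closedPolydisc n) := fun l hl ↦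
    update_mem_closedPolydisc hz j (mem_ball_zero_iff.1 hl).le
  have hφ (l) (hl : l ∈ ball (0 : ℂ) 1) : φ (Function.update z j l) i = φ z i :=
    h.update_apply_eq hz hi hJ (mem_ball_zero_iff.1 hl).le
  by_cases hk : k = j ∨ z k = 0
  · refine ⟨0, fun l hl ↦ h.jacEntry_eq_zero_of_norm_lt_one (hm hl) (by rw [hφ l hl, hi]) ?_⟩
    rcases eq_or_ne k j with rfl | hkj
    · simpa using hl
    · simp [hkj, hk.resolve_left hkj]
  obtain ⟨hkj, hzk⟩ := not_or.1 hk
  let f (l : ℂ) : ℂ :=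
    starRingEnd ℂ (φ z i) * (jacobian φ (Function.update z j l) *ᵥ Pi.single k (-z k)) i
  have hf : DifferentiableOn ℂ f (ball 0 1) := by
    refine (h.differentiableOn_mulVec_comp isOpen_ball
      (fun l _ ↦ (hasDerivAt_update z j l).differentiableAt.differentiableWithinAt) hm
      (fun l hl ↦ ?_) i).const_mul _
    have hkill : Function.update z j l + Pi.single k (-z k) =
        Function.update (Function.update z j l) k 0 := by
      rw [eq_comm, ← sub_eq_iff_eq_add', update_sub_eq_single, Function.update_of_ne hkj, zero_sub]
    exact hkill ▸ update_mem_closedPolydisc (hm hl) k (by simp)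
  have hfeq (l) :
      f l = starRingEnd ℂ (φ z i) * jacEntry n φ (Function.update z j l) i k * -z k := by
    rw [mul_assoc, ← jacobian_mulVec_single_apply]
  have hreal (l) (hl : l ∈ ball (0 : ℂ) 1) : (f l).im = 0 := by
    have hJulia := h.jacEntry_mul_eq (hm hl) (by rw [hφ l hl, hi]) k
    rw [Function.update_of_ne hkj, hφ l hl] at hJulia
    rw [hfeq, mul_assoc, mul_neg, hJulia, mul_neg, ← mul_assoc,
      ← Complex.normSq_eq_conj_mul_self, ← Complex.ofReal_mul, ← Complex.ofReal_neg,
      Complex.ofReal_im]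
  obtain ⟨c, hc⟩ := (hf.analyticOnNhd isOpen_ball).eq_const_of_im_eq_const hreal isOpen_ball
    (isConnected_ball zero_lt_one)
  have hφ0 : starRingEnd ℂ (φ z i) ≠ 0 := by
    rw [← norm_ne_zero_iff, RCLike.norm_conj, hi]; exact one_ne_zero
  refine ⟨c / (starRingEnd ℂ (φ z i) * -z k), fun l hl ↦ ?_⟩
  rw [eq_div_iff (mul_ne_zero hφ0 (neg_ne_zero.2 hzk)), ← hc l hl, hfeq]
  ring

lemma jacEntry_update_eq (h : IsC1SelfMap φ) (hz : z ∈ closedPolydisc n) (hi : ‖φ z i‖ = 1)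
    (hJ : jacEntry n φ z i j = 0) (k : Fin n) {l : ℂ} (hl : ‖l‖ ≤ 1) :
    jacEntry n φ (Function.update z j l) i k = jacEntry n φ z i k := by
  obtain ⟨c, hc⟩ := h.exists_forall_jacEntry_update_eq hz hi hJ k
  have hcont : ContinuousOn (fun l ↦ jacEntry n φ (Function.update z j l) i k) (closedBall 0 1) :=
    (h.continuousOn_jacEntry i k).comp
      (fun l _ ↦ (hasDerivAt_update z j l).continuousAt.continuousWithinAt) fun l hl ↦
        update_mem_closedPolydisc hz j (mem_closedBall_zero_iff.1 hl)
  have hconst : EqOn (fun l ↦ jacEntry n φ (Function.update z j l) i k) (fun _ ↦ c)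
      (closedBall 0 1) :=
    EqOn.of_subset_closure hc hcont continuousOn_const ball_subset_closedBall
      (closure_ball _ one_ne_zero).ge
  calc jacEntry n φ (Function.update z j l) i k = c := hconst (mem_closedBall_zero_iff.2 hl)
    _ = jacEntry n φ (Function.update z j (z j)) i k :=
      (hconst (mem_closedBall_zero_iff.2 (hz j))).symm
    _ = jacEntry n φ z i k := by rw [Function.update_eq_self]

lemma piecewise_apply_eq (h : IsC1SelfMap φ) (hz : z ∈ closedPolydisc n)
    {w : Fin n → ℂ} (hw : w ∈ closedPolydisc n) (S : Finset (Fin n)) :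
    S.piecewise w z ∈ closedPolydisc n ∧ ∀ i, ‖φ z i‖ = 1 → (∀ j ∈ S, jacEntry n φ z i j = 0) →
      φ (S.piecewise w z) i = φ z i ∧
        ∀ k, jacEntry n φ (S.piecewise w z) i k = jacEntry n φ z i k := by
  induction S using Finset.induction_on with
  | empty => simpa using hz
  | insert j S _ ih =>
    rw [Finset.piecewise_insert]
    refine ⟨update_mem_closedPolydisc ih.1 j (hw j), fun i hi hJ ↦ ?_⟩
    obtain ⟨hφ, hJac⟩ := ih.2 i hi fun j hj ↦ hJ j (Finset.mem_insert_of_mem hj)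
    have hj : jacEntry n φ (S.piecewise w z) i j = 0 := by
      rw [hJac, hJ j (Finset.mem_insert_self j S)]
    rw [← hφ] at hi ⊢
    refine ⟨h.update_apply_eq ih.1 hi hj (hw j), fun k ↦ ?_⟩
    rw [h.jacEntry_update_eq ih.1 hi hj k (hw j), hJac]

lemma exists_mem_torus (h : IsC1SelfMap φ) (hz : z ∈ closedPolydisc n) :
    ∃ w ∈ torus n, ∀ i, ‖φ z i‖ = 1 →
      φ w i = φ z i ∧ ∀ k, jacEntry n φ w i k = jacEntry n φ z i k := by
  classical
  set S : Finset (Fin n) := {j | ‖z j‖ < 1} with hS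
  obtain ⟨-, hrigid⟩ := h.piecewise_apply_eq hz (w := 1) (fun _ ↦ by simp) S
  refine ⟨S.piecewise 1 z, fun j ↦ ?_, fun i hi ↦ hrigid i hi fun j hj ↦
    h.jacEntry_eq_zero_of_norm_lt_one hz hi (by simpa [hS] using hj)⟩
  by_cases hj : ‖z j‖ < 1
  · simp [S, hj]
  · simpa [S, hj] using (hz j).antisymm (not_lt.1 hj)

end IsC1SelfMap

/-! ### Volume bounds for preimages of Carleson boxes -/

section Volume

lemma exists_eqOn_linearIndependent {K V ι : Type*} [DivisionRing K] [AddCommGroup V] [Module K V]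
    [Fintype ι] (hcard : Fintype.card ι ≤ Module.finrank K V) {v : ι → V} {s : Finset ι}
    (hv : LinearIndepOn K v s) : ∃ w : ι → V, EqOn w v s ∧ LinearIndependent K w := by
  classical
  suffices H : ∀ t : Finset ι, ∃ w : ι → V, EqOn w v s ∧ LinearIndepOn K w ↑(s ∪ t) by
    obtain ⟨w, hw, hli⟩ := H Finset.univ
    exact ⟨w, hw, by simpa using hli⟩
  intro t
  induction t using Finset.induction_on with
  | empty => exact ⟨v, eqOn_refl _ _, by simpa using hv⟩
  | insert a t _ ih =>
    obtain ⟨w, hw, hli⟩ := ih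
    rw [Finset.union_insert]
    by_cases ha : a ∈ s ∪ t
    · exact ⟨w, hw, by rwa [Finset.insert_eq_of_mem ha]⟩
    have hspan : Submodule.span K (w '' ↑(s ∪ t)) < ⊤ := by
      apply Submodule.lt_top_of_finrank_lt_finrank
      calc Module.finrank K (Submodule.span K (w '' ↑(s ∪ t))) ≤ (s ∪ t).card := by
            rw [← Finset.coe_image]
            exact (finrank_span_finset_le_card _).trans Finset.card_image_le
        _ < Fintype.card ι := Finset.card_lt_univ_of_notMem ha
        _ ≤ Module.finrank K V := hcard
    obtain ⟨x, -, hx⟩ := SetLike.exists_of_lt hspan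
    have heq : EqOn (Function.update w a x) w ↑(s ∪ t) := fun k hk ↦
      Function.update_of_ne (ne_of_mem_of_not_mem hk ha) _ _
    refine ⟨Function.update w a x, fun k hk ↦ ?_, ?_⟩
    · rw [heq (Finset.mem_union_left t hk), hw hk]
    · rw [Finset.coe_insert]
      refine (hli.congr heq.symm).insert ?_
      rwa [heq.image_eq, Function.update_self]

lemma isUnit_updateRow_one {ι K : Type*} [Fintype ι] [DecidableEq ι] [Field K] {i : ι} {v : ι → K}
    (hv : v i ≠ 0) : IsUnit ((1 : Matrix ι ι K).updateRow i v) := by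
  rw [isUnit_iff_isUnit_det, ← cramer_transpose_apply, transpose_one, cramer_one]
  exact hv.isUnit

lemma exists_measure_inter_preimage_le {E : Type*} [NormedAddCommGroup E] [NormedSpace ℝ E]
    [FiniteDimensional ℝ E] [MeasurableSpace E] [BorelSpace E] (μ : Measure E) [μ.IsAddHaarMeasure]
    {A : E →L[ℝ] E} (hA : Function.Injective A) :
    ∃ ε > 0, ∃ C ≠ ⊤, ∀ (s : Set E) (f : E → E), ApproximatesLinearOn f A s ε →
      ∀ t, μ (s ∩ f ⁻¹' t) ≤ C * μ t := by
  have hdet : A.det ≠ 0 := (LinearMap.isUnit_det (A : E →ₗ[ℝ] E)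
    ((LinearMap.isUnit_iff_ker_eq_bot _).2 (LinearMap.ker_eq_bot.2 hA))).ne_zero
  obtain ⟨m, hm, hmA⟩ := ENNReal.lt_iff_exists_nnreal_btwn.1
    (ENNReal.ofReal_pos.2 (abs_pos.2 hdet))
  obtain ⟨ε, hle, hε⟩ := ((mul_le_addHaar_image_of_lt_det μ A hmA).and self_mem_nhdsWithin).exists
  refine ⟨ε, hε, (m : ℝ≥0∞)⁻¹, ENNReal.inv_ne_top.2 hm.ne', fun s f hf t ↦ ?_⟩
  rw [← ENNReal.div_eq_inv_mul, ENNReal.le_div_iff_mul_le (.inl hm.ne') (.inl coe_ne_top), mul_comm]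
  exact (hle _ f (hf.mono_set inter_subset_left)).trans
    (measure_mono (image_subset_iff.2 inter_subset_right))

lemma coe_nnreal_pi : (NNReal.pi : ℝ≥0∞) = ENNReal.ofReal Real.pi :=
  ENNReal.ofReal_coe_nnreal.symm

lemma volume_closedBall_sdiff_ball_le {t : ℝ} (ht : 0 ≤ t) :
    volume (closedBall (0 : ℂ) 1 \ ball 0 (1 - t)) ≤ ENNReal.ofReal (2 * Real.pi * t) := by
  have hpi := Real.pi_pos
  rcases le_total 1 t with h1 | h1
  · calc _ ≤ volume (closedBall (0 : ℂ) 1) := measure_mono sdiff_subset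
      _ = ENNReal.ofReal Real.pi := by simp [coe_nnreal_pi]
      _ ≤ _ := ENNReal.ofReal_le_ofReal (by nlinarith)
  · have hsub : ball (0 : ℂ) (1 - t) ⊆ closedBall 0 1 :=
      (ball_subset_ball (by linarith)).trans ball_subset_closedBall
    calc _ = volume (closedBall (0 : ℂ) 1) - volume (ball (0 : ℂ) (1 - t)) :=
          measure_sdiff hsub measurableSet_ball.nullMeasurableSet measure_ball_lt_top.ne
      _ = ENNReal.ofReal (Real.pi - (1 - t) ^ 2 * Real.pi) := by
        rw [Complex.volume_closedBall, Complex.volume_ball, coe_nnreal_pi, ENNReal.ofReal_one,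
          one_pow, one_mul, ENNReal.ofReal_sub Real.pi (by positivity),
          ENNReal.ofReal_mul (sq_nonneg _), ENNReal.ofReal_pow (sub_nonneg.2 h1)]
      _ ≤ _ := ENNReal.ofReal_le_ofReal (by nlinarith [mul_nonneg hpi.le (sq_nonneg t)])

end Volume

section CarlesonBox

variable {n : ℕ} {w x : Fin n → ℂ}

/-- The product of the discs centred at `w i` and internally tangent to the unit circle, used as the
Carleson box over `w`. -/
def carlesonBox (w : Fin n → ℂ) : Set (Fin n → ℂ) :=
  univ.pi fun i ↦ closedBall (w i) (1 - ‖w i‖)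

lemma one_sub_norm_le_of_mem_closedBall {a b : ℂ} (h : a ∈ closedBall b (1 - ‖b‖)) :
    1 - ‖a‖ ≤ 2 * (1 - ‖b‖) := by
  linarith [norm_sub_norm_le b a, mem_closedBall_iff_norm'.1 h]

lemma volume_carlesonBox (w : Fin n → ℂ) :
    volume (carlesonBox w) = ∏ i, volume (closedBall (w i) (1 - ‖w i‖)) := by
  rw [carlesonBox, volume_pi_pi]

/-- The Carleson-type condition on `U`: the part in `U` of the preimage under `φ` of each Carleson
box is at most proportional in volume to the box. -/
def IsCarlesonOn (φ : (Fin n → ℂ) → Fin n → ℂ) (U : Set (Fin n → ℂ)) : Prop :=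
  ∃ C ≠ (⊤ : ℝ≥0∞), ∀ w ∈ polydisc n,
    volume (U ∩ φ ⁻¹' carlesonBox w) ≤ C * volume (carlesonBox w)

lemma IsCarlesonOn.mono {φ : (Fin n → ℂ) → Fin n → ℂ} {U V : Set (Fin n → ℂ)}
    (h : IsCarlesonOn φ V) (hUV : U ⊆ V) : IsCarlesonOn φ U := by
  obtain ⟨C, hC, H⟩ := h
  exact ⟨C, hC, fun w hw ↦ (measure_mono (inter_subset_inter_left _ hUV)).trans (H w hw)⟩

lemma IsCarlesonOn.union {φ : (Fin n → ℂ) → Fin n → ℂ} {U V : Set (Fin n → ℂ)}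
    (hU : IsCarlesonOn φ U) (hV : IsCarlesonOn φ V) : IsCarlesonOn φ (U ∪ V) := by
  obtain ⟨C, hC, HC⟩ := hU
  obtain ⟨D, hD, HD⟩ := hV
  refine ⟨C + D, ENNReal.add_ne_top.2 ⟨hC, hD⟩, fun w hw ↦ ?_⟩
  rw [union_inter_distrib_right, add_mul]
  exact (measure_union_le _ _).trans (add_le_add (HC w hw) (HD w hw))

end CarlesonBox

namespace IsC1SelfMap

variable {n : ℕ} {φ : (Fin n → ℂ) → Fin n → ℂ} {ζ : Fin n → ℂ} {i : Fin n}

lemma exists_volume_piecewise_preimage_le (h : IsC1SelfMap φ) (hζ : ζ ∈ closedPolydisc n)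
    (I : Finset (Fin n)) {M : Matrix (Fin n) (Fin n) ℂ} (hM : IsUnit M)
    (hI : EqOn M (jacEntry n φ ζ) I) :
    ∃ U ∈ 𝓝[closedPolydisc n] ζ, ∃ C ≠ (⊤ : ℝ≥0∞), ∀ T : Fin n → Set ℂ,
      volume (U ∩ {x | I.piecewise (φ x) (M *ᵥ x) ∈ univ.pi T}) ≤ C * ∏ i, volume (T i) := by
  let A : (Fin n → ℂ) →L[ℝ] Fin n → ℂ := M.toLin'.toContinuousLinearMap.restrictScalars ℝ
  have hA : Function.Injective A := mulVec_injective_iff_isUnit.2 hM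
  obtain ⟨ε, hε, C, hC, H⟩ := exists_measure_inter_preimage_le volume hA
  obtain ⟨δ, hδ, happrox⟩ := h.exists_approximatesLinearOn hε
  refine ⟨closedPolydisc n ∩ ball ζ δ, inter_mem_nhdsWithin _ (ball_mem_nhds _ hδ), C, hC,
    fun T ↦ volume_pi_pi T ▸ H _ _ (fun x hx y hy ↦ ?_) _⟩
  refine (pi_norm_le_iff_of_nonneg (by positivity)).2 fun i ↦ ?_
  by_cases hi : i ∈ I
  · have hrow : (M *ᵥ (x - y)) i = (jacobian φ ζ *ᵥ (x - y)) i := by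
      simp only [mulVec, jacobian, Matrix.of_apply, hI hi]
    calc _ = ‖(φ x - φ y - jacobian φ ζ *ᵥ (x - y)) i‖ := by
          simp only [Pi.sub_apply, hi, Finset.piecewise_eq_of_mem, ← hrow]
          rfl
      _ ≤ ‖φ x - φ y - jacobian φ ζ *ᵥ (x - y)‖ := norm_le_pi_norm _ i
      _ ≤ _ := happrox ζ hζ x hx y hy
  · have hlin : (I.piecewise (φ x) (M *ᵥ x) - I.piecewise (φ y) (M *ᵥ y) - A (x - y)) i = 0 := by
      simp only [Pi.sub_apply, hi, not_false_eq_true, Finset.piecewise_eq_of_notMem, map_sub]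
      exact sub_self _
    rw [hlin, norm_zero]
    positivity

lemma exists_forall_le_one_sub_norm (h : IsC1SelfMap φ) (hζ : ζ ∈ closedPolydisc n) :
    ∃ ε > 0, ∀ᶠ x in 𝓝[closedPolydisc n] ζ, ∀ i, ‖φ ζ i‖ ≠ 1 → ε ≤ 1 - ‖φ x i‖ := by
  have hsmall : ∀ᶠ ε : ℝ in 𝓝[>] 0, ∀ i, ‖φ ζ i‖ ≠ 1 → ε < 1 - ‖φ ζ i‖ := by
    refine eventually_all.2 fun i ↦ nhdsWithin_le_nhds ?_
    by_cases hi : ‖φ ζ i‖ = 1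
    · simp [hi]
    · filter_upwards [gt_mem_nhds (sub_pos.2 ((h.mapsTo_closedPolydisc hζ i).lt_of_ne hi))]
        with ε hε _ using hε
  obtain ⟨ε, hlt, hε⟩ := (hsmall.and self_mem_nhdsWithin).exists
  refine ⟨ε, hε, eventually_all.2 fun i ↦ ?_⟩
  by_cases hi : ‖φ ζ i‖ = 1
  · simp [hi]
  have hcont : ContinuousWithinAt (fun x ↦ 1 - ‖φ x i‖) (closedPolydisc n) ζ :=
    continuousWithinAt_const.sub (continuousWithinAt_pi.1 (h.continuousOn ζ hζ) i).norm
  filter_upwards [hcont.eventually (lt_mem_nhds (hlt i hi))] with x hx _ using hx.le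

lemma exists_isCarlesonOn_of_linearIndepOn (h : IsC1SelfMap φ) (hζ : ζ ∈ closedPolydisc n)
    {I : Finset (Fin n)} (hI : ∀ i ∉ I, ‖φ ζ i‖ ≠ 1) (hli : LinearIndepOn ℂ (jacEntry n φ ζ) I) :
    ∃ U ∈ 𝓝[closedPolydisc n] ζ, IsCarlesonOn φ U := by
  obtain ⟨M, hMI, hM⟩ := exists_eqOn_linearIndependent (by simp) hli
  obtain ⟨U, hU, C, hC, H⟩ := h.exists_volume_piecewise_preimage_le hζ I
    (linearIndependent_rows_iff_isUnit.1 hM) hMI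
  obtain ⟨ε, hε, hfar⟩ := h.exists_forall_le_one_sub_norm hζ
  obtain ⟨R, hR⟩ := isCompact_closedPolydisc.exists_bound_of_continuousOn (f := (Matrix.of M *ᵥ ·))
    (Continuous.matrix_mulVec continuous_const continuous_id).continuousOn
  set B : ℝ := max 1 (2 * R / ε)
  have hB : 0 ≤ B := zero_le_one.trans (le_max_left _ _)
  refine ⟨_, inter_mem (inter_mem hU hfar) self_mem_nhdsWithin, C * ENNReal.ofReal (B ^ 2) ^ n,
    by finiteness, fun w hw ↦ ?_⟩
  have hd (i) : 0 < 1 - ‖w i‖ := sub_pos.2 (hw i)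
  let T (i : Fin n) : Set ℂ := closedBall (I.piecewise w 0 i) (B * (1 - ‖w i‖))
  calc _ ≤ volume (U ∩ {x | I.piecewise (φ x) (M *ᵥ x) ∈ univ.pi T}) := by
        refine measure_mono fun x ⟨⟨⟨hxU, hxε⟩, hx⟩, hxw⟩ ↦ ⟨hxU, fun i _ ↦ ?_⟩
        have hxi := mem_univ_pi.1 hxw i
        by_cases hi : i ∈ I
        · simp only [T, hi, Finset.piecewise_eq_of_mem]
          exact closedBall_subset_closedBall
            (le_mul_of_one_le_left (hd i).le (le_max_left _ _)) hxi
        · simp only [T, hi, not_false_eq_true, Finset.piecewise_eq_of_notMem, Pi.zero_apply,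
            mem_closedBall_zero_iff]
          have hεw : ε ≤ 2 * (1 - ‖w i‖) :=
            (hxε i (hI i hi)).trans (one_sub_norm_le_of_mem_closedBall hxi)
          calc ‖(M *ᵥ x) i‖ ≤ R := (norm_le_pi_norm _ i).trans (hR x hx)
            _ = R / ε * ε := (div_mul_cancel₀ R hε.ne').symm
            _ ≤ R / ε * (2 * (1 - ‖w i‖)) := by
              have : 0 ≤ R := (norm_nonneg _).trans (hR x hx)
              gcongr
            _ = 2 * R / ε * (1 - ‖w i‖) := by ring
            _ ≤ B * (1 - ‖w i‖) := by gcongr; exacts [(hd i).le, le_max_right _ _]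
    _ ≤ C * ∏ i, volume (T i) := H T
    _ = C * ENNReal.ofReal (B ^ 2) ^ n * volume (carlesonBox w) := by
      have hT (i) : volume (T i) =
          ENNReal.ofReal (B ^ 2) * volume (closedBall (w i) (1 - ‖w i‖)) := by
        rw [Measure.addHaar_closedBall_mul _ _ hB (hd i).le, Complex.finrank_real_complex,
          Measure.addHaar_closedBall_center _ (w i)]
      simp only [hT, Finset.prod_mul_distrib, Finset.prod_const, Finset.card_univ,
        Fintype.card_fin, volume_carlesonBox, mul_assoc]

lemma continuousOn_apply_update_zero (h : IsC1SelfMap φ) (i l : Fin n) :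
    ContinuousOn (fun x ↦ φ (Function.update x l 0) i) (closedPolydisc n) :=
  (continuousOn_pi.1 h.continuousOn i).comp (continuous_id.update l continuous_const).continuousOn
    fun _ hx ↦ update_mem_closedPolydisc hx l (by simp)

lemma one_sub_norm_mul_one_sub_norm_update_le (h : IsC1SelfMap φ) {x : Fin n → ℂ}
    (hx : x ∈ closedPolydisc n) (i l : Fin n) :
    (1 - ‖x l‖) * (1 - ‖φ (Function.update x l 0) i‖) ≤ 4 * (1 - ‖φ x i‖) := by
  have hφ := continuousOn_pi.1 h.continuousOn i
  have hcentre := h.continuousOn_apply_update_zero i l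
  rw [← closure_polydisc] at hx hφ hcentre
  refine le_on_closure (fun x hx ↦ ?_)
    ((continuous_const.sub (continuous_apply l).norm).continuousOn.mul
      (continuousOn_const.sub hcentre.norm))
    (continuousOn_const.mul (continuousOn_const.sub hφ.norm)) hx
  have hm : MapsTo (Function.update x l) (ball 0 1) (polydisc n) := fun m hm k ↦ by
    rcases eq_or_ne k l with rfl | hk
    · simpa using hm
    · simpa [hk] using hx k
  have hd : DifferentiableOn ℂ (fun m ↦ φ (Function.update x l m) i) (ball 0 1) :=
    differentiableOn_pi.1 (h.differentiableOn.comp (fun m _ ↦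
      (hasDerivAt_update x l m).differentiableAt.differentiableWithinAt) hm) i
  simpa using one_sub_norm_mul_one_sub_norm_le hd (fun m hm' ↦ h.mapsTo (hm hm') i)
    (mem_ball_zero_iff.2 (hx l))

lemma norm_apply_update_zero_lt_one (h : IsC1SelfMap φ) (hζ : ζ ∈ closedPolydisc n) {l : Fin n}
    (hJ : jacEntry n φ ζ i l ≠ 0) : ‖φ (Function.update ζ l 0) i‖ < 1 := by
  have hc : Function.update ζ l 0 ∈ closedPolydisc n := update_mem_closedPolydisc hζ l (by simp)
  refine (h.mapsTo_closedPolydisc hc i).lt_of_ne fun hone ↦ hJ ?_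
  have hzero : jacEntry n φ (Function.update ζ l 0) i l = 0 :=
    h.jacEntry_eq_zero_of_norm_lt_one hc hone (by simp)
  rw [← Function.update_eq_self l ζ, ← Function.update_idem 0,
    h.jacEntry_update_eq hc hone hzero l (hζ l), hzero]

lemma exists_one_sub_norm_le (h : IsC1SelfMap φ) (hζ : ζ ∈ closedPolydisc n) {l : Fin n}
    (hJ : jacEntry n φ ζ i l ≠ 0) :
    ∃ C, ∀ᶠ x in 𝓝[closedPolydisc n] ζ, 1 - ‖x l‖ ≤ C * (1 - ‖φ x i‖) := by
  obtain ⟨ε, hε, hεζ⟩ := exists_between (sub_pos.2 (h.norm_apply_update_zero_lt_one hζ hJ))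
  have hcont := (continuousOn_const (c := (1 : ℝ)).sub
    (h.continuousOn_apply_update_zero i l).norm) ζ hζ
  refine ⟨4 / ε, ?_⟩
  filter_upwards [hcont.eventually (lt_mem_nhds hεζ), self_mem_nhdsWithin] with x hxε hx
  rw [div_mul_eq_mul_div, le_div_iff₀ hε]
  exact (mul_le_mul_of_nonneg_left hxε.le (sub_nonneg.2 (hx l))).trans
    (h.one_sub_norm_mul_one_sub_norm_update_le hx i l)

lemma exists_forall_one_sub_norm_le (h : IsC1SelfMap φ) (hζ : ζ ∈ closedPolydisc n)
    (hJ : ∀ l, jacEntry n φ ζ i l ≠ 0) :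
    ∃ C ≥ 1, ∀ᶠ x in 𝓝[closedPolydisc n] ζ, ∀ l, 1 - ‖x l‖ ≤ C * (1 - ‖φ x i‖) := by
  choose B hB using fun l ↦ h.exists_one_sub_norm_le hζ (hJ l)
  obtain ⟨C, hC⟩ := (finite_range B).bddAbove
  refine ⟨max 1 C, le_max_left _ _, ?_⟩
  filter_upwards [eventually_all.2 hB, self_mem_nhdsWithin] with x hxB hx l
  refine (hxB l).trans (mul_le_mul_of_nonneg_right ?_ ?_)
  · exact (hC (mem_range_self l)).trans (le_max_right _ _)
  · exact sub_nonneg.2 (h.mapsTo_closedPolydisc hx i)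

/-- The extra factor over the area of the disc comes from the coordinates `x l` with `l ≠ i`, which
are confined to thin annuli because `1 - ‖x l‖` is controlled by `1 - ‖φ x i‖`. -/
lemma exists_volume_preimage_closedBall_le (h : IsC1SelfMap φ) (hζ : ζ ∈ closedPolydisc n)
    (hJ : ∀ l, jacEntry n φ ζ i l ≠ 0) :
    ∃ U ∈ 𝓝[closedPolydisc n] ζ, ∃ C ≠ (⊤ : ℝ≥0∞), ∀ w ∈ ball (0 : ℂ) 1,
      volume (U ∩ {x | φ x i ∈ closedBall w (1 - ‖w‖)}) ≤
        C * ENNReal.ofReal (1 - ‖w‖) ^ (n + 1) := by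
  obtain ⟨S, hS, hradial⟩ := h.exists_forall_one_sub_norm_le hζ hJ
  set M : Matrix (Fin n) (Fin n) ℂ := Matrix.updateRow 1 i (jacEntry n φ ζ i) with hM
  obtain ⟨U, hU, C, hC, H⟩ := h.exists_volume_piecewise_preimage_le hζ {i}
    (isUnit_updateRow_one (hJ i)) (by simp [EqOn])
  refine ⟨_, inter_mem (inter_mem hU hradial) self_mem_nhdsWithin,
    C * ENNReal.ofReal (2 * Real.pi * (S * 2)) ^ n, by finiteness, fun w hw ↦ ?_⟩
  set d := 1 - ‖w‖
  have hd : 0 < d := sub_pos.2 (mem_ball_zero_iff.1 hw)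
  let T (l : Fin n) : Set ℂ :=
    if l = i then closedBall w d else closedBall 0 1 \ ball 0 (1 - S * (2 * d))
  calc _ ≤ volume (U ∩ {x | Finset.piecewise {i} (φ x) (M *ᵥ x) ∈ univ.pi T}) := by
        refine measure_mono fun x ⟨⟨⟨hxU, hxS⟩, hx⟩, hxw⟩ ↦ ⟨hxU, fun l _ ↦ ?_⟩
        rcases eq_or_ne l i with rfl | hl
        · simpa [T] using hxw
        · have hxl : 1 - ‖x l‖ ≤ S * (2 * d) :=
            (hxS l).trans (by gcongr; exact one_sub_norm_le_of_mem_closedBall hxw)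
          have hMx : (M *ᵥ x) l = x l := by
            simp [hM, mulVec, updateRow_ne hl, one_apply, dotProduct]
          simp only [T, hl, Finset.mem_singleton, not_false_eq_true, hMx,
            Finset.piecewise_eq_of_notMem, if_false]
          exact ⟨mem_closedBall_zero_iff.2 (hx l),
            fun hball ↦ by linarith [mem_ball_zero_iff.1 hball]⟩
    _ ≤ C * ∏ l, volume (T l) := H T
    _ ≤ C * ∏ l, (ENNReal.ofReal (2 * Real.pi * (S * 2)) * ENNReal.ofReal d ^
          (1 + if l = i then 1 else 0)) := by
        gcongr with l
        rcases eq_or_ne l i with rfl | hl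
        · simp only [T, if_true, Complex.volume_closedBall]
          rw [coe_nnreal_pi, mul_comm]
          gcongr
          nlinarith [Real.pi_pos]
        · simp only [T, hl, if_false]
          refine (volume_closedBall_sdiff_ball_le (by positivity)).trans_eq ?_
          rw [add_zero, pow_one, ← ENNReal.ofReal_mul (by positivity)]
          ring_nf
    _ = C * ENNReal.ofReal (2 * Real.pi * (S * 2)) ^ n * ENNReal.ofReal d ^ (n + 1) := by
      rw [Finset.prod_mul_distrib, Finset.prod_pow_eq_pow_sum]
      simp [Finset.sum_add_distrib, mul_assoc]

end IsC1SelfMap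

section CarlesonBox

variable {n : ℕ}

lemma ofReal_pow_le_volume_carlesonBox {w : Fin n → ℂ} {I : Finset (Fin n)} {d ε : ℝ} (hd : 0 ≤ d)
    (hI : ∀ i ∈ I, d ≤ 1 - ‖w i‖) (hε : 0 < ε) (hIc : ∀ i ∉ I, ε ≤ 1 - ‖w i‖) :
    ENNReal.ofReal d ^ (2 * I.card) ≤
      (ENNReal.ofReal (max 1 ε⁻¹) ^ 2) ^ n * volume (carlesonBox w) := by
  set B := max 1 ε⁻¹
  have hB : 0 ≤ B := zero_le_one.trans (le_max_left _ _)
  have hle (i : Fin n) : (if i ∈ I then d else 1) ≤ B * (1 - ‖w i‖) := by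
    split_ifs with hi
    · exact (hI i hi).trans (le_mul_of_one_le_left (hd.trans (hI i hi)) (le_max_left _ _))
    · calc (1 : ℝ) = ε⁻¹ * ε := (inv_mul_cancel₀ hε.ne').symm
        _ ≤ B * (1 - ‖w i‖) := by gcongr; exacts [le_max_right _ _, hIc i hi]
  have hfactor (i : Fin n) : (if i ∈ I then ENNReal.ofReal d ^ 2 else 1) ≤
      ENNReal.ofReal B ^ 2 * volume (closedBall (w i) (1 - ‖w i‖)) := by
    calc _ = ENNReal.ofReal (if i ∈ I then d else 1) ^ 2 := by split_ifs <;> simp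
      _ ≤ ENNReal.ofReal (B * (1 - ‖w i‖)) ^ 2 := by gcongr; exact hle i
      _ = ENNReal.ofReal B ^ 2 * (ENNReal.ofReal (1 - ‖w i‖) ^ 2 * 1) := by
        rw [ENNReal.ofReal_mul hB, mul_pow, mul_one]
      _ ≤ _ := by
        rw [Complex.volume_closedBall, coe_nnreal_pi]
        gcongr
        exact ENNReal.one_le_ofReal.2 (by linarith [Real.pi_gt_three])
  calc _ = ∏ i, (if i ∈ I then ENNReal.ofReal d ^ 2 else 1) := by
        rw [Finset.prod_ite_mem, Finset.univ_inter, Finset.prod_const, pow_mul]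
    _ ≤ ∏ i, (ENNReal.ofReal B ^ 2 * volume (closedBall (w i) (1 - ‖w i‖))) :=
      Finset.prod_le_prod' fun i _ ↦ hfactor i
    _ = _ := by simp [Finset.prod_mul_distrib, volume_carlesonBox]

end CarlesonBox

namespace IsC1SelfMap

variable {n : ℕ} {φ : (Fin n → ℂ) → Fin n → ℂ} {ζ : Fin n → ℂ}

lemma exists_isCarlesonOn_of_forall_jacEntry_ne_zero (h : IsC1SelfMap φ)
    (hζ : ζ ∈ closedPolydisc n) {I : Finset (Fin n)} (hne : I.Nonempty) (hcard : 2 * I.card ≤ n + 1)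
    (hI : ∀ i ∉ I, ‖φ ζ i‖ ≠ 1) (hJ : ∀ i ∈ I, ∀ l, jacEntry n φ ζ i l ≠ 0) :
    ∃ U ∈ 𝓝[closedPolydisc n] ζ, IsCarlesonOn φ U := by
  choose! U hU C hC H using fun i hi ↦ h.exists_volume_preimage_closedBall_le hζ (hJ i hi)
  obtain ⟨ε, hε, hfar⟩ := h.exists_forall_le_one_sub_norm hζ
  refine ⟨_, inter_mem ((biInter_finset_mem I).2 hU) hfar,
    (∑ i ∈ I, C i) * (ENNReal.ofReal (max 1 (ε / 2)⁻¹) ^ 2) ^ n,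
    ENNReal.mul_ne_top (ENNReal.sum_ne_top.2 hC) (by finiteness), fun w hw ↦ ?_⟩
  rcases eq_empty_or_nonempty ((⋂ i ∈ I, U i) ∩ {x | ∀ i, ‖φ ζ i‖ ≠ 1 → ε ≤ 1 - ‖φ x i‖} ∩
    φ ⁻¹' carlesonBox w) with hempty | ⟨x, ⟨-, hxε⟩, hxw⟩
  · simp [hempty]
  have hIc (i) (hi : i ∉ I) : ε / 2 ≤ 1 - ‖w i‖ := by
    linarith [hxε i (hI i hi), one_sub_norm_le_of_mem_closedBall (mem_univ_pi.1 hxw i)]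
  obtain ⟨k, hkI, hk⟩ := I.exists_min_image (fun i ↦ 1 - ‖w i‖) hne
  set d := 1 - ‖w k‖
  have hd_one : d ≤ 1 := sub_le_self _ (norm_nonneg _)
  calc _ ≤ volume (U k ∩ {x | φ x k ∈ closedBall (w k) d}) :=
        measure_mono fun x hx ↦ ⟨mem_iInter₂.1 hx.1.1 k hkI, mem_univ_pi.1 hx.2 k⟩
    _ ≤ C k * ENNReal.ofReal d ^ (n + 1) := H k hkI _ (mem_ball_zero_iff.2 (hw k))
    _ ≤ (∑ i ∈ I, C i) * ENNReal.ofReal d ^ (2 * I.card) := by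
      gcongr ?_ * ?_
      · exact Finset.single_le_sum (f := C) (fun _ _ ↦ zero_le) hkI
      · exact pow_le_pow_right_of_le_one' (ENNReal.ofReal_le_one.2 hd_one) hcard
    _ ≤ _ := by
      rw [mul_assoc]
      gcongr
      exact ofReal_pow_le_volume_carlesonBox (sub_nonneg.2 (hw k).le) hk (half_pos hε) hIc

lemma isCarlesonOn_closedPolydisc (h : IsC1SelfMap φ)
    (H : ∀ ζ ∈ torus n, ∀ I : Finset (Fin n), (∀ i ∈ I, ‖φ ζ i‖ = 1) →
      LinearIndepOn ℂ (jacEntry n φ ζ) I ∨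
        2 * I.card ≤ n + 1 ∧ ∀ i ∈ I, ∀ l, jacEntry n φ ζ i l ≠ 0) :
    IsCarlesonOn φ (closedPolydisc n) := by
  refine isCompact_closedPolydisc.induction_on ⟨0, by simp, by simp⟩ (fun _ _ hst ht ↦ ht.mono hst)
    (fun _ _ ↦ .union) fun ζ hζ ↦ ?_
  obtain ⟨w, hw, hwζ⟩ := h.exists_mem_torus hζ
  have hI (i) : i ∈ ({i | ‖φ ζ i‖ = 1} : Finset (Fin n)) ↔ ‖φ ζ i‖ = 1 := Finset.mem_filter_univ i
  set I : Finset (Fin n) := {i | ‖φ ζ i‖ = 1}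
  have hIc (i) (hi : i ∉ I) : ‖φ ζ i‖ ≠ 1 := mt (hI i).2 hi
  have hJ (i) (hi : i ∈ I) : jacEntry n φ w i = jacEntry n φ ζ i :=
    funext (hwζ i ((hI i).1 hi)).2
  have hwI (i) (hi : i ∈ I) : ‖φ w i‖ = 1 := by rw [(hwζ i ((hI i).1 hi)).1, (hI i).1 hi]
  rcases I.eq_empty_or_nonempty with hempty | hne
  · exact h.exists_isCarlesonOn_of_linearIndepOn hζ hIc (by simp [hempty])
  rcases H w hw I hwI with hli | ⟨hcard, hnz⟩
  · exact h.exists_isCarlesonOn_of_linearIndepOn hζ hIc (hli.congr hJ)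
  · exact h.exists_isCarlesonOn_of_forall_jacEntry_ne_zero hζ hne hcard hIc
      fun i hi l ↦ hJ i hi ▸ hnz i hi l

lemma linearIndepOn_or_jacEntry_ne_zero {φ : (Fin 3 → ℂ) → Fin 3 → ℂ} (h : IsC1SelfMap φ)
    (hdet : ∀ ζ ∈ torus 3, φ ζ ∈ torus 3 → (Matrix.of fun i j ↦ jacEntry 3 φ ζ i j).det ≠ 0)
    (hpair : ∀ i₁ i₂ : Fin 3, i₁ < i₂ → ∀ ζ ∈ torus 3, ‖φ ζ i₁‖ = 1 → ‖φ ζ i₂‖ = 1 →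
      LinearIndependent ℂ ![fun j ↦ jacEntry 3 φ ζ i₁ j, fun j ↦ jacEntry 3 φ ζ i₂ j] ∨
        ∀ j : Fin 3, jacEntry 3 φ ζ i₁ j ≠ 0 ∧ jacEntry 3 φ ζ i₂ j ≠ 0)
    {ζ : Fin 3 → ℂ} (hζ : ζ ∈ torus 3) (I : Finset (Fin 3)) (hI : ∀ i ∈ I, ‖φ ζ i‖ = 1) :
    LinearIndepOn ℂ (jacEntry 3 φ ζ) I ∨
      2 * I.card ≤ 3 + 1 ∧ ∀ i ∈ I, ∀ l, jacEntry 3 φ ζ i l ≠ 0 := by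
  have hcard : I.card ≤ 3 := card_finset_fin_le I
  interval_cases hk : I.card
  · simp [Finset.card_eq_zero.1 hk]
  · obtain ⟨i, rfl⟩ := Finset.card_eq_one.1 hk
    obtain ⟨j, hj⟩ := h.exists_jacEntry_ne_zero (torus_subset_closedPolydisc hζ)
      (hI i (Finset.mem_singleton_self i))
    rw [Finset.coe_singleton, linearIndepOn_singleton_iff]
    exact .inl fun hzero ↦ hj (congrFun hzero j)
  · obtain ⟨i₁, i₂, hne, rfl⟩ := Finset.card_eq_two.1 hk
    wlog hlt : i₁ < i₂ generalizing i₁ i₂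
    · rw [Finset.pair_comm] at hI hk ⊢
      exact this i₂ i₁ hne.symm hI hk (hne.lt_or_gt.resolve_left hlt)
    refine (hpair i₁ i₂ hlt ζ hζ (hI i₁ (by simp)) (hI i₂ (by simp))).imp (fun hli ↦ ?_)
      fun hnz ↦ ⟨le_rfl, by simpa using ⟨fun l ↦ (hnz l).1, fun l ↦ (hnz l).2⟩⟩
    rw [Finset.coe_pair, LinearIndepOn.pair_iff _ hne]
    exact LinearIndependent.pair_iff.1 hli
  · obtain rfl := (Finset.card_eq_iff_eq_univ I).1 hk
    rw [Finset.coe_univ, linearIndepOn_univ_iff]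
    exact .inl (linearIndependent_rows_of_det_ne_zero
      (hdet ζ hζ fun i ↦ hI i (Finset.mem_univ i)))

end IsC1SelfMap

/-! ### The Carleson embedding theorem -/

section MeanValue

variable {n : ℕ} {F : Type*} [NormedAddCommGroup F] [NormedSpace ℂ F] [CompleteSpace F]

lemma ofReal_two_pi_mul_enorm_le_lintegral {g : ℂ → F}
    (hg : DifferentiableOn ℂ g (closedBall 0 1)) :
    ENNReal.ofReal (2 * Real.pi) * ‖g 0‖ₑ ≤
      ∫⁻ θ in Ioc 0 (2 * Real.pi), ‖g (circleMap 0 1 θ)‖ₑ := by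
  have hmean : Real.circleAverage g 0 1 = g 0 := by
    refine DiffContOnCl.circleAverage (DifferentiableOn.diffContOnCl ?_)
    rwa [abs_one, closure_ball _ one_ne_zero]
  have hpi : 0 < 2 * Real.pi := Real.two_pi_pos
  rw [Real.circleAverage_def, intervalIntegral.integral_of_le hpi.le, inv_smul_eq_iff₀ hpi.ne']
    at hmean
  rw [← Real.enorm_of_nonneg hpi.le, ← enorm_smul, ← hmean]
  exact enorm_integral_le_lintegral_enorm _

lemma measurePreserving_smul_of_norm_eq_one {c : ℂ} (hc : ‖c‖ = 1) :
    MeasurePreserving (fun z : Fin n → ℂ ↦ c • z) :=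
  volume_preserving_pi fun _ ↦
    (rotation ⟨c, mem_sphere_zero_iff_norm.2 hc⟩).measurePreserving

lemma setLIntegral_comp_smul_of_balanced {B : Set (Fin n → ℂ)} (hB : Balanced ℂ B) {c : ℂ}
    (hc : ‖c‖ = 1) (u : (Fin n → ℂ) → ℝ≥0∞) : ∫⁻ z in B, u (c • z) = ∫⁻ z in B, u z := by
  have hpre : (fun z : Fin n → ℂ ↦ c • z) ⁻¹' B = B := by
    ext z
    simpa using hB.smul_mem_iff (a := c) (b := 1) (by simp [hc])
  have hc0 : c ≠ 0 := norm_ne_zero_iff.1 (hc ▸ one_ne_zero)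
  conv_lhs => rw [← hpre]
  exact (measurePreserving_smul_of_norm_eq_one hc).setLIntegral_comp_preimage_emb
    (measurableEmbedding_const_smul₀ hc0) u B

/-- The mean value property along the discs `θ ↦ exp (iθ) • z` suffices: averaging over `θ` does not
change the integral over a balanced set. -/
lemma volume_mul_enorm_le_setLIntegral {B : Set (Fin n → ℂ)} (hB : Balanced ℂ B) (hBo : IsOpen B)
    {g : (Fin n → ℂ) → F} (hg : DifferentiableOn ℂ g B) :
    volume B * ‖g 0‖ₑ ≤ ∫⁻ z in B, ‖g z‖ₑ := by
  have hpi : ENNReal.ofReal (2 * Real.pi) ≠ 0 := (ENNReal.ofReal_pos.2 Real.two_pi_pos).ne'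
  have hmem {c : ℂ} (hc : ‖c‖ ≤ 1) {z : Fin n → ℂ} (hz : z ∈ B) : c • z ∈ B :=
    hB.smul_mem hc hz
  have hmean (z) (hz : z ∈ B) : ENNReal.ofReal (2 * Real.pi) * ‖g 0‖ₑ ≤
      ∫⁻ θ in Ioc 0 (2 * Real.pi), ‖g (circleMap 0 1 θ • z)‖ₑ := by
    have hline : DifferentiableOn ℂ (fun c : ℂ ↦ g (c • z)) (closedBall 0 1) :=
      hg.comp (differentiable_id.smul_const z).differentiableOn
        fun c hc ↦ hmem (mem_closedBall_zero_iff.1 hc) hz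
    simpa using ofReal_two_pi_mul_enorm_le_lintegral hline
  have hmeas : AEMeasurable (fun p : (Fin n → ℂ) × ℝ ↦ ‖g (circleMap 0 1 p.2 • p.1)‖ₑ)
      ((volume.restrict B).prod (volume.restrict (Ioc 0 (2 * Real.pi)))) := by
    rw [Measure.prod_restrict]
    refine ContinuousOn.aemeasurable ?_ (hBo.measurableSet.prod measurableSet_Ioc)
    refine (hg.continuousOn.comp (Continuous.continuousOn ?_) fun p hp ↦ ?_).enorm
    · exact ((continuous_circleMap 0 1).comp continuous_snd).smul continuous_fst
    · exact hmem (by simp) hp.1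
  rw [← ENNReal.mul_le_mul_iff_right hpi ENNReal.ofReal_ne_top]
  calc _ = ∫⁻ _ in B, ENNReal.ofReal (2 * Real.pi) * ‖g 0‖ₑ := by
        rw [setLIntegral_const]; ring
    _ ≤ ∫⁻ z in B, ∫⁻ θ in Ioc 0 (2 * Real.pi), ‖g (circleMap 0 1 θ • z)‖ₑ :=
      setLIntegral_mono' hBo.measurableSet hmean
    _ = ∫⁻ θ in Ioc 0 (2 * Real.pi), ∫⁻ z in B, ‖g (circleMap 0 1 θ • z)‖ₑ :=
      lintegral_lintegral_swap hmeas
    _ = ∫⁻ _ in Ioc 0 (2 * Real.pi), ∫⁻ z in B, ‖g z‖ₑ := by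
      refine lintegral_congr fun θ ↦ ?_
      exact setLIntegral_comp_smul_of_balanced hB (by simp) fun z ↦ ‖g z‖ₑ
    _ = _ := by simp [mul_comm]

lemma volume_mul_enorm_le_setLIntegral_pi_ball {w : Fin n → ℂ} {r : Fin n → ℝ}
    {g : (Fin n → ℂ) → F} (hg : DifferentiableOn ℂ g (univ.pi fun i ↦ ball (w i) (r i))) :
    volume (univ.pi fun i ↦ ball (w i) (r i)) * ‖g w‖ₑ ≤
      ∫⁻ z in univ.pi fun i ↦ ball (w i) (r i), ‖g z‖ₑ := by
  have hpre : (w + ·) ⁻¹' (univ.pi fun i ↦ ball (w i) (r i)) =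
      univ.pi fun i ↦ ball (0 : ℂ) (r i) := by
    ext z; simp
  have hbal : Balanced ℂ (univ.pi fun i ↦ ball (0 : ℂ) (r i)) :=
    balanced_iff_smul_mem.2 fun c hc z hz i hi ↦ (balanced_ball_zero (𝕜 := ℂ)).smul_mem hc (hz i hi)
  have hd : DifferentiableOn ℂ (fun z ↦ g (w + z)) (univ.pi fun i ↦ ball (0 : ℂ) (r i)) :=
    hg.comp (differentiable_id.const_add w).differentiableOn hpre.ge
  have hmean := volume_mul_enorm_le_setLIntegral hbal
    (isOpen_set_pi finite_univ fun _ _ ↦ isOpen_ball) hd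
  rwa [← hpre, measure_preimage_add, add_zero,
    (measurePreserving_add_left volume w).setLIntegral_comp_preimage_emb
      (measurableEmbedding_addLeft w) (fun z ↦ ‖g z‖ₑ)] at hmean

end MeanValue

section CarlesonEmbedding

variable {n : ℕ} {w z : Fin n → ℂ}

lemma measurableSet_carlesonBox (w : Fin n → ℂ) : MeasurableSet (carlesonBox w) :=
  .univ_pi fun _ ↦ measurableSet_closedBall

/-- The polydisc centred at `w` whose radii are half those of `carlesonBox w`. -/
def halfBox (w : Fin n → ℂ) : Set (Fin n → ℂ) :=
  univ.pi fun i ↦ ball (w i) ((1 - ‖w i‖) / 2)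

lemma measurableSet_halfBox (w : Fin n → ℂ) : MeasurableSet (halfBox w) :=
  .univ_pi fun _ ↦ measurableSet_ball

lemma halfBox_subset_polydisc (hw : w ∈ polydisc n) : halfBox w ⊆ polydisc n := fun z hz i ↦ by
  linarith [hw i, norm_sub_norm_le (z i) (w i), mem_ball_iff_norm.1 (hz i (mem_univ i))]

lemma mem_carlesonBox_of_mem_halfBox (h : z ∈ halfBox w) : w ∈ carlesonBox z := fun i hi ↦ by
  have hzw := mem_ball_iff_norm.1 (h i hi)
  rw [mem_closedBall_iff_norm']
  linarith [norm_sub_norm_le (z i) (w i)]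

lemma inv_volume_halfBox_le (h : z ∈ halfBox w) :
    (volume (halfBox w))⁻¹ ≤ 9 ^ n * (volume (carlesonBox z))⁻¹ := by
  have hfactor (i : Fin n) : volume (closedBall (z i) (1 - ‖z i‖)) ≤
      9 * volume (ball (w i) ((1 - ‖w i‖) / 2)) := by
    have hr : 1 - ‖z i‖ ≤ 3 * ((1 - ‖w i‖) / 2) := by
      linarith [mem_ball_iff_norm'.1 (h i (mem_univ i)), norm_sub_norm_le (w i) (z i)]
    calc _ ≤ ENNReal.ofReal (3 * ((1 - ‖w i‖) / 2)) ^ 2 * NNReal.pi := by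
          rw [Complex.volume_closedBall]
          gcongr
      _ = _ := by
        rw [Complex.volume_ball, ENNReal.ofReal_mul (by norm_num), mul_pow, mul_assoc]
        norm_num
  have hle : volume (carlesonBox z) ≤ 9 ^ n * volume (halfBox w) := by
    calc _ ≤ ∏ i, 9 * volume (ball (w i) ((1 - ‖w i‖) / 2)) :=
          volume_carlesonBox z ▸ Finset.prod_le_prod' fun i _ ↦ hfactor i
      _ = _ := by simp [Finset.prod_mul_distrib, halfBox, volume_pi_pi]
  calc _ = 9 ^ n * (9 ^ n * volume (halfBox w))⁻¹ := by
        rw [ENNReal.mul_inv (.inl (by simp)) (.inl (by finiteness)), ← mul_assoc,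
          ENNReal.mul_inv_cancel (by simp) (by finiteness), one_mul]
    _ ≤ _ := by gcongr

lemma isOpen_setOf_mem_halfBox : IsOpen {p : (Fin n → ℂ) × (Fin n → ℂ) | p.2 ∈ halfBox p.1} := by
  simp only [halfBox, mem_univ_pi, mem_ball, ofPred_forall]
  exact isOpen_iInter_of_finite fun i ↦ isOpen_lt (by fun_prop) (by fun_prop)

lemma enorm_sq_le_setLIntegral_halfBox {f : (Fin n → ℂ) → ℂ}
    (hf : DifferentiableOn ℂ f (polydisc n)) (hw : w ∈ polydisc n) :
    ‖f w‖ₑ ^ 2 ≤ ∫⁻ z in halfBox w, 9 ^ n * (volume (carlesonBox z))⁻¹ * ‖f z‖ₑ ^ 2 := by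
  have hvol : volume (halfBox w) = ∏ i, volume (ball (w i) ((1 - ‖w i‖) / 2)) := by
    rw [halfBox, volume_pi_pi]
  have hpos : volume (halfBox w) ≠ 0 := hvol ▸ Finset.prod_ne_zero_iff.2 fun i _ ↦
    (measure_ball_pos _ _ (half_pos (sub_pos.2 (hw i)))).ne'
  have htop : volume (halfBox w) ≠ ⊤ := hvol ▸ ENNReal.prod_ne_top fun _ _ ↦ measure_ball_lt_top.ne
  have hmean : volume (halfBox w) * ‖f w ^ 2‖ₑ ≤ ∫⁻ z in halfBox w, ‖f z ^ 2‖ₑ :=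
    volume_mul_enorm_le_setLIntegral_pi_ball ((hf.mono (halfBox_subset_polydisc hw)).pow 2)
  simp only [enorm_pow] at hmean
  calc ‖f w‖ₑ ^ 2 ≤ (volume (halfBox w))⁻¹ * ∫⁻ z in halfBox w, ‖f z‖ₑ ^ 2 :=
        (ENNReal.mul_le_iff_le_inv hpos htop).1 hmean
    _ = ∫⁻ z in halfBox w, (volume (halfBox w))⁻¹ * ‖f z‖ₑ ^ 2 :=
      (lintegral_const_mul' _ _ (ENNReal.inv_ne_top.2 hpos)).symm
    _ ≤ _ := setLIntegral_mono' (measurableSet_halfBox w)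
      fun z hz ↦ by gcongr; exact inv_volume_halfBox_le hz

/-- Carleson embedding: integrate the mean value property over `halfBox w` against `μ`. -/
theorem setLIntegral_enorm_sq_le_of_carlesonBox {μ : Measure (Fin n → ℂ)} [SFinite μ] {C : ℝ≥0∞}
    (hμ : ∀ z ∈ polydisc n, μ (carlesonBox z) ≤ C * volume (carlesonBox z))
    {f : (Fin n → ℂ) → ℂ} (hf : DifferentiableOn ℂ f (polydisc n)) :
    ∫⁻ w in polydisc n, ‖f w‖ₑ ^ 2 ∂μ ≤ 9 ^ n * C * ∫⁻ z in polydisc n, ‖f z‖ₑ ^ 2 := by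
  have hm : MeasurableSet (polydisc n) := isOpen_polydisc.measurableSet
  set u : (Fin n → ℂ) → ℝ≥0∞ := fun z ↦ 9 ^ n * (volume (carlesonBox z))⁻¹ * ‖f z‖ₑ ^ 2
  have hu : AEMeasurable u (volume.restrict (polydisc n)) := by
    refine AEMeasurable.mul (Measurable.aemeasurable ?_)
      ((hf.continuousOn.aemeasurable hm).enorm.pow_const 2)
    simp only [volume_carlesonBox, Complex.volume_closedBall]
    fun_prop
  have hmeas : AEMeasurable (fun p : (Fin n → ℂ) × (Fin n → ℂ) ↦ (halfBox p.1).indicator u p.2)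
      ((μ.restrict (polydisc n)).prod (volume.restrict (polydisc n))) :=
    hu.comp_snd.indicator isOpen_setOf_mem_halfBox.measurableSet
  calc _ ≤ ∫⁻ w in polydisc n, (∫⁻ z in polydisc n, (halfBox w).indicator u z) ∂μ := by
        refine setLIntegral_mono' hm fun w hw ↦ ?_
        rw [setLIntegral_indicator (measurableSet_halfBox w),
          inter_eq_left.2 (halfBox_subset_polydisc hw)]
        exact enorm_sq_le_setLIntegral_halfBox hf hw
    _ = ∫⁻ z in polydisc n, (∫⁻ w in polydisc n, (halfBox w).indicator u z ∂μ) :=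
      lintegral_lintegral_swap hmeas
    _ ≤ ∫⁻ z in polydisc n, u z * μ (carlesonBox z) := by
      refine lintegral_mono fun z ↦ ?_
      rw [← lintegral_indicator_const (measurableSet_carlesonBox z)]
      refine (setLIntegral_le_lintegral _ _).trans (lintegral_mono fun w ↦ ?_)
      exact indicator_apply_le' (fun hz ↦ by
        rw [indicator_of_mem (mem_carlesonBox_of_mem_halfBox hz)]) fun _ ↦ zero_le
    _ ≤ ∫⁻ z in polydisc n, 9 ^ n * C * ‖f z‖ₑ ^ 2 := by
      refine setLIntegral_mono' hm fun z hz ↦ ?_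
      calc _ ≤ u z * (C * volume (carlesonBox z)) := by gcongr; exact hμ z hz
        _ = 9 ^ n * C * ‖f z‖ₑ ^ 2 * ((volume (carlesonBox z))⁻¹ * volume (carlesonBox z)) := by
          simp only [u]; ring
        _ ≤ _ := mul_le_of_le_one_right' (ENNReal.inv_mul_le_one _)
    _ = _ := lintegral_const_mul'' _ ((hf.continuousOn.aemeasurable hm).enorm.pow_const 2)

end CarlesonEmbedding

section Bounded

variable {n : ℕ} {φ : (Fin n → ℂ) → Fin n → ℂ}

lemma bddBergman_zero_iff : bddBergman n 0 φ ↔ ∃ C ≠ (⊤ : ℝ≥0∞),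
    ∀ f : (Fin n → ℂ) → ℂ, DifferentiableOn ℂ f (polydisc n) →
      ∫⁻ z in polydisc n, ‖f (φ z)‖ₑ ^ 2 ≤ C * ∫⁻ z in polydisc n, ‖f z‖ₑ ^ 2 := by
  set c := ENNReal.ofReal ((1 / Real.pi) ^ n)
  have hc : c ≠ 0 := (ENNReal.ofReal_pos.2 (by positivity)).ne'
  have hV : Vbeta n 0 = c • volume.restrict (polydisc n) := by simp [Vbeta, withDensity_const, c]
  have hsq (x : ℂ) : ENNReal.ofReal (‖x‖ ^ 2) = ‖x‖ₑ ^ 2 := by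
    rw [ENNReal.ofReal_pow (norm_nonneg _), ofReal_norm]
  simp only [bddBergman, hV, lintegral_smul_measure, hsq, smul_eq_mul,
    mul_left_comm _ c, ENNReal.mul_le_mul_iff_right hc ENNReal.ofReal_ne_top]
  refine ⟨fun ⟨C, _, H⟩ ↦ ⟨ENNReal.ofReal C, ENNReal.ofReal_ne_top, H⟩, fun ⟨C, hC, H⟩ ↦
    ⟨C.toReal + 1, by positivity, fun f hf ↦ (H f hf).trans ?_⟩⟩
  gcongr
  exact (ENNReal.ofReal_toReal hC).ge.trans (ENNReal.ofReal_le_ofReal (by linarith))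

lemma IsCarlesonOn.bddBergman (hφ : IsCarlesonOn φ (polydisc n))
    (hc : ContinuousOn φ (polydisc n)) (hm : MapsTo φ (polydisc n) (polydisc n)) :
    bddBergman n 0 φ := by
  obtain ⟨C, hC, H⟩ := hφ
  have hP : MeasurableSet (polydisc n) := isOpen_polydisc.measurableSet
  have hφm : AEMeasurable φ (volume.restrict (polydisc n)) := hc.aemeasurable hP
  refine bddBergman_zero_iff.2 ⟨9 ^ n * C, by finiteness, fun f hf ↦ ?_⟩
  have hpush : ∫⁻ z in polydisc n, ‖f (φ z)‖ₑ ^ 2 =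
      ∫⁻ w in polydisc n, ‖f w‖ₑ ^ 2 ∂(volume.restrict (polydisc n)).map φ := by
    have hself : ((volume.restrict (polydisc n)).map φ).restrict (polydisc n) =
        (volume.restrict (polydisc n)).map φ :=
      Measure.restrict_eq_self_of_ae_mem ((ae_map_iff hφm hP).2 ((ae_restrict_mem hP).mono hm))
    rw [hself, lintegral_map' _ hφm]
    rw [← hself]
    exact (hf.continuousOn.aemeasurable hP).enorm.pow_const 2
  rw [hpush]
  refine setLIntegral_enorm_sq_le_of_carlesonBox (fun w hw ↦ ?_) hf
  rw [Measure.map_apply_of_aemeasurable hφm (measurableSet_carlesonBox w),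
    Measure.restrict_apply' hP, inter_comm]
  exact H w hw

end Bounded

/-! ### Products of one-variable Bergman kernels -/

lemma lintegral_fin_prod_eq_prod {n : ℕ} {E : Fin n → Type*} {mE : ∀ i, MeasurableSpace (E i)}
    {μ : ∀ i, Measure (E i)} [∀ i, SigmaFinite (μ i)] {g : ∀ i, E i → ℝ≥0∞}
    (hg : ∀ i, Measurable (g i)) :
    ∫⁻ x, ∏ i, g i (x i) ∂Measure.pi μ = ∏ i, ∫⁻ x, g i x ∂μ i := by
  induction n with
  | zero => simp
  | succ n ih =>
    have hprod : Measurable fun x : ∀ i : Fin n, E i.succ ↦ ∏ i, g i.succ (x i) :=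
      Finset.measurable_fun_prod _ fun i _ ↦ (hg i.succ).comp (measurable_pi_apply i)
    calc _ = ∫⁻ x : E 0 × ∀ i : Fin n, E i.succ, g 0 x.1 * ∏ i, g i.succ (x.2 i)
          ∂(μ 0).prod (Measure.pi fun i ↦ μ i.succ) := by
          rw [← (measurePreserving_piFinSuccAbove μ 0).symm.lintegral_comp_emb
            (MeasurableEquiv.measurableEmbedding _)]
          exact lintegral_congr fun x ↦ Fin.prod_univ_succ _
      _ = (∫⁻ x, g 0 x ∂μ 0) * ∏ i : Fin n, ∫⁻ x, g i.succ x ∂μ i.succ := by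
          rw [← ih fun i ↦ hg i.succ, ← lintegral_prod_mul (hg 0).aemeasurable hprod.aemeasurable]
      _ = _ := (Fin.prod_univ_succ fun i ↦ ∫⁻ x, g i x ∂μ i).symm

lemma abs_det_restrictScalars_toSpanSingleton (c : ℂ) :
    |((ContinuousLinearMap.toSpanSingleton ℂ c).restrictScalars ℝ).det| = ‖c‖ ^ 2 := by
  have hdet : ((ContinuousLinearMap.toSpanSingleton ℂ c).restrictScalars ℝ).det =
      LinearMap.det ((LinearMap.toSpanSingleton ℂ ℂ c).restrictScalars ℝ) := rfl
  rw [hdet, LinearMap.det_restrictScalars]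
  simp [Algebra.norm_complex_apply, Complex.normSq_eq_norm_sq]

section Moebius

open ComplexConjugate

variable {w z : ℂ}

lemma one_sub_conj_mul_ne_zero (hw : ‖w‖ < 1) (hz : ‖z‖ ≤ 1) : 1 - conj w * z ≠ 0 := by
  refine fun h0 ↦ (mul_lt_one_of_nonneg_of_lt_one_left (norm_nonneg _) hw hz).ne ?_
  rw [← RCLike.norm_conj w, ← norm_mul, ← sub_eq_zero.1 h0, norm_one]

lemma norm_one_sub_conj_mul_sq_sub :
    ‖1 - conj w * z‖ ^ 2 - ‖z - w‖ ^ 2 = (1 - ‖w‖ ^ 2) * (1 - ‖z‖ ^ 2) := by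
  apply Complex.ofReal_injective
  push_cast
  simp only [← Complex.conj_mul', map_sub, map_mul, map_one, Complex.conj_conj]
  ring

lemma norm_moebius_lt_one (hw : ‖w‖ < 1) (hz : ‖z‖ < 1) : ‖(z - w) / (1 - conj w * z)‖ < 1 := by
  rw [norm_div, div_lt_one (norm_pos_iff.2 (one_sub_conj_mul_ne_zero hw hz.le)),
    ← sq_lt_sq₀ (norm_nonneg _) (norm_nonneg _), ← sub_pos, norm_one_sub_conj_mul_sq_sub]
  exact mul_pos (sub_pos.2 (pow_lt_one₀ (norm_nonneg _) hw two_ne_zero))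
    (sub_pos.2 (pow_lt_one₀ (norm_nonneg _) hz two_ne_zero))

lemma injOn_moebius (hw : ‖w‖ < 1) : InjOn (fun z ↦ (z - w) / (1 - conj w * z)) (ball 0 1) := by
  intro z hz u hu hzu
  rw [mem_ball_zero_iff] at hz hu
  have hw' : 1 - conj w * w ≠ 0 := one_sub_conj_mul_ne_zero hw hw.le
  rw [div_eq_div_iff (one_sub_conj_mul_ne_zero hw hz.le) (one_sub_conj_mul_ne_zero hw hu.le)] at hzu
  exact mul_right_cancel₀ hw' (by linear_combination hzu)

lemma hasDerivAt_moebius (hw : ‖w‖ < 1) (hz : ‖z‖ < 1) :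
    HasDerivAt (fun z ↦ (z - w) / (1 - conj w * z))
      ((1 - ‖w‖ ^ 2) * ((1 - conj w * z) ^ 2)⁻¹) z := by
  have hden : HasDerivAt (fun z ↦ 1 - conj w * z) (-conj w) z := by
    simpa using ((hasDerivAt_id z).const_mul (conj w)).const_sub 1
  have hquot := ((hasDerivAt_id z).sub_const w).fun_div hden (one_sub_conj_mul_ne_zero hw hz.le)
  refine hquot.congr_deriv ?_
  rw [← Complex.conj_mul', div_eq_mul_inv]
  simp only [id]
  ring

/-- The Möbius transformation exchanging `w` and `0` has derivative `(1 - ‖w‖²) / (1 - w̄ z)²`, and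
its image of the unit disc has area at most `π`. -/
lemma setLIntegral_enorm_inv_one_sub_conj_mul_sq_le (hw : ‖w‖ < 1) :
    ∫⁻ z in ball (0 : ℂ) 1, ‖((1 - conj w * z) ^ 2)⁻¹‖ₑ ^ 2 ≤
      NNReal.pi * ENNReal.ofReal (((1 - ‖w‖ ^ 2) ^ 2)⁻¹) := by
  set c : ℝ := (1 - ‖w‖ ^ 2) ^ 2
  have hc : 0 < c := pow_pos (sub_pos.2 (pow_lt_one₀ (norm_nonneg _) hw two_ne_zero)) 2
  have hvol := lintegral_abs_det_fderiv_eq_addHaar_image volume measurableSet_ball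
    (fun z hz ↦ ((hasDerivAt_moebius hw (mem_ball_zero_iff.1 hz)).hasFDerivAt.restrictScalars
      ℝ).hasFDerivWithinAt) (injOn_moebius hw)
  have hsub : (fun z ↦ (z - w) / (1 - conj w * z)) '' ball 0 1 ⊆ ball 0 1 :=
    image_subset_iff.2 fun z hz ↦
      mem_ball_zero_iff.2 (norm_moebius_lt_one hw (mem_ball_zero_iff.1 hz))
  have hjac (z : ℂ) :
      ENNReal.ofReal (‖(1 - (‖w‖ : ℂ) ^ 2) * ((1 - conj w * z) ^ 2)⁻¹‖ ^ 2) =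
        ENNReal.ofReal c * ‖((1 - conj w * z) ^ 2)⁻¹‖ₑ ^ 2 := by
    have hnorm : ‖(1 - (‖w‖ : ℂ) ^ 2)‖ ^ 2 = c := by
      rw [← Complex.ofReal_pow, ← Complex.ofReal_one, ← Complex.ofReal_sub, Complex.norm_real,
        Real.norm_eq_abs, sq_abs]
    rw [norm_mul, mul_pow, hnorm, ENNReal.ofReal_mul hc.le, ENNReal.ofReal_pow (norm_nonneg _),
      ofReal_norm]
  simp only [abs_det_restrictScalars_toSpanSingleton, hjac] at hvol
  rw [lintegral_const_mul' _ _ ENNReal.ofReal_ne_top] at hvol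
  rw [ENNReal.ofReal_inv_of_pos hc, ← div_eq_mul_inv,
    ENNReal.le_div_iff_mul_le (.inl (ENNReal.ofReal_pos.2 hc).ne') (.inl ENNReal.ofReal_ne_top),
    mul_comm, hvol]
  simpa using measure_mono (μ := volume) hsub

end Moebius

section BergmanKernel

open ComplexConjugate

variable {n : ℕ} {I : Finset (Fin n)} {w z : Fin n → ℂ}

/-- The product over the coordinates in `I` of the one-variable Bergman kernels with pole
parameters `w i`, without the normalising factors `1 / π`. -/
def partialBergmanKernel (I : Finset (Fin n)) (w z : Fin n → ℂ) : ℂ :=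
  ∏ i ∈ I, ((1 - conj (w i) * z i) ^ 2)⁻¹

lemma differentiableOn_partialBergmanKernel (hw : ∀ i ∈ I, ‖w i‖ < 1) :
    DifferentiableOn ℂ (partialBergmanKernel I w) (polydisc n) := by
  have hfactor (i) (hi : i ∈ I) :
      DifferentiableOn ℂ (fun z : Fin n → ℂ ↦ ((1 - conj (w i) * z i) ^ 2)⁻¹) (polydisc n) :=
    .fun_inv (by fun_prop) fun z hz ↦
      pow_ne_zero 2 (one_sub_conj_mul_ne_zero (hw i hi) (hz i).le)
  exact fun z hz ↦ (HasFDerivWithinAt.finsetProd fun i hi ↦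
    (hfactor i hi z hz).hasFDerivWithinAt).differentiableWithinAt

lemma enorm_partialBergmanKernel_sq :
    ‖partialBergmanKernel I w z‖ₑ ^ 2 = ∏ i ∈ I, ‖((1 - conj (w i) * z i) ^ 2)⁻¹‖ₑ ^ 2 := by
  rw [Finset.prod_pow, partialBergmanKernel, ← ofReal_norm, norm_prod,
    ENNReal.ofReal_prod_of_nonneg fun _ _ ↦ norm_nonneg _]
  simp only [ofReal_norm]

lemma setLIntegral_enorm_partialBergmanKernel_sq_le (hw : ∀ i ∈ I, ‖w i‖ < 1) :
    ∫⁻ z in polydisc n, ‖partialBergmanKernel I w z‖ₑ ^ 2 ≤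
      NNReal.pi ^ n * ∏ i ∈ I, ENNReal.ofReal (((1 - ‖w i‖ ^ 2) ^ 2)⁻¹) := by
  set g : Fin n → ℂ → ℝ≥0∞ := fun i z ↦
    if i ∈ I then ‖((1 - conj (w i) * z) ^ 2)⁻¹‖ₑ ^ 2 else 1
  have hg (i : Fin n) : Measurable (g i) := by
    by_cases hi : i ∈ I <;> simp only [g, hi, if_true, if_false] <;> fun_prop
  have hprod (z : Fin n → ℂ) : ‖partialBergmanKernel I w z‖ₑ ^ 2 = ∏ i, g i (z i) := by
    rw [enorm_partialBergmanKernel_sq, Finset.prod_ite_mem, Finset.univ_inter]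
  have hfactor (i : Fin n) : ∫⁻ z in ball (0 : ℂ) 1, g i z ≤
      NNReal.pi * if i ∈ I then ENNReal.ofReal (((1 - ‖w i‖ ^ 2) ^ 2)⁻¹) else 1 := by
    by_cases hi : i ∈ I
    · simpa only [g, hi, if_true] using setLIntegral_enorm_inv_one_sub_conj_mul_sq_le (hw i hi)
    · simp [g, hi]
  have hpi : polydisc n = univ.pi fun _ ↦ ball 0 1 := by ext; simp [polydisc]
  rw [hpi, volume_pi, Measure.restrict_pi_pi]
  simp only [hprod]
  calc _ = ∏ i, ∫⁻ z in ball (0 : ℂ) 1, g i z := lintegral_fin_prod_eq_prod hg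
    _ ≤ _ := Finset.prod_le_prod' fun i _ ↦ hfactor i
    _ = _ := by
      rw [Finset.prod_mul_distrib, Finset.prod_ite_mem, Finset.univ_inter]
      simp

variable {p u : Fin n → ℂ} {δ : ℝ}

lemma norm_one_sub_conj_smul_mul_le {p u : ℂ} (hp : ‖p‖ = 1) (hδ : 0 ≤ δ) (hδ1 : δ ≤ 1) :
    ‖1 - conj ((1 - δ) • p) * u‖ ≤ δ + ‖u - p‖ := by
  have hsplit : 1 - conj ((1 - δ) • p) * u = δ - ((1 - δ : ℝ) : ℂ) * conj p * (u - p) := by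
    have hpp : conj p * p = 1 := by rw [Complex.conj_mul', hp]; simp
    simp only [Complex.real_smul, map_mul, Complex.conj_ofReal]
    push_cast
    linear_combination -(1 - (δ : ℂ)) * hpp
  calc _ ≤ ‖(δ : ℂ)‖ + ‖((1 - δ : ℝ) : ℂ) * conj p * (u - p)‖ := hsplit ▸ norm_sub_le _ _
    _ = δ + (1 - δ) * ‖u - p‖ := by
      rw [norm_mul, norm_mul, RCLike.norm_conj, hp, Complex.norm_real, Complex.norm_real,
        Real.norm_of_nonneg hδ, Real.norm_of_nonneg (sub_nonneg.2 hδ1), mul_one]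
    _ ≤ _ := by nlinarith [norm_nonneg (u - p)]

lemma norm_one_sub_smul_of_norm_eq_one {p : ℂ} (hp : ‖p‖ = 1) (hδ1 : δ ≤ 1) :
    ‖(1 - δ) • p‖ = 1 - δ := by
  rw [norm_smul, hp, mul_one, Real.norm_of_nonneg (sub_nonneg.2 hδ1)]

lemma setLIntegral_enorm_partialBergmanKernel_smul_sq_le (hp : ∀ i ∈ I, ‖p i‖ = 1)
    (hδ : 0 < δ) (hδ1 : δ ≤ 1) :
    ∫⁻ z in polydisc n, ‖partialBergmanKernel I ((1 - δ) • p) z‖ₑ ^ 2 ≤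
      NNReal.pi ^ n * (ENNReal.ofReal δ ^ (2 * I.card))⁻¹ := by
  have hnorm (i) (hi : i ∈ I) : ‖((1 - δ) • p) i‖ = 1 - δ :=
    norm_one_sub_smul_of_norm_eq_one (hp i hi) hδ1
  refine (setLIntegral_enorm_partialBergmanKernel_sq_le fun i hi ↦ ?_).trans ?_
  · rw [hnorm i hi]; linarith
  have hfactor (i) (hi : i ∈ I) :
      ENNReal.ofReal (((1 - ‖((1 - δ) • p) i‖ ^ 2) ^ 2)⁻¹) ≤ (ENNReal.ofReal δ ^ 2)⁻¹ := by
    rw [← ENNReal.ofReal_pow hδ.le, ← ENNReal.ofReal_inv_of_pos (by positivity), hnorm i hi]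
    gcongr
    nlinarith
  calc _ ≤ NNReal.pi ^ n * ∏ _i ∈ I, (ENNReal.ofReal δ ^ 2)⁻¹ := by
        gcongr with i hi; exact hfactor i hi
    _ = _ := by rw [Finset.prod_const, ← ENNReal.inv_pow, ← pow_mul]

lemma inv_le_enorm_partialBergmanKernel_smul_sq {D : Fin n → ℝ} (hp : ∀ i ∈ I, ‖p i‖ = 1)
    (hδ : 0 < δ) (hδ1 : δ ≤ 1) (hu : ∀ i ∈ I, ‖u i‖ ≤ 1) (hD : ∀ i ∈ I, ‖u i - p i‖ ≤ D i * δ) :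
    (ENNReal.ofReal δ ^ (4 * I.card) * ∏ i ∈ I, ENNReal.ofReal (1 + D i) ^ 4)⁻¹ ≤
      ‖partialBergmanKernel I ((1 - δ) • p) u‖ₑ ^ 2 := by
  have hfactor (i) (hi : i ∈ I) : (ENNReal.ofReal δ ^ 4 * ENNReal.ofReal (1 + D i) ^ 4)⁻¹ ≤
      ‖((1 - conj (((1 - δ) • p) i) * u i) ^ 2)⁻¹‖ₑ ^ 2 := by
    have hne : 1 - conj (((1 - δ) • p) i) * u i ≠ 0 := by
      refine one_sub_conj_mul_ne_zero ?_ (hu i hi)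
      rw [Pi.smul_apply, norm_one_sub_smul_of_norm_eq_one (hp i hi) hδ1]
      linarith
    rw [enorm_inv (pow_ne_zero 2 hne), ← ENNReal.inv_pow, enorm_pow, ← pow_mul, ← mul_pow,
      ← ENNReal.ofReal_mul hδ.le, ENNReal.inv_le_inv, ← ofReal_norm]
    gcongr
    refine (norm_one_sub_conj_smul_mul_le (hp i hi) hδ.le hδ1).trans ?_
    linarith [hD i hi]
  rw [enorm_partialBergmanKernel_sq]
  refine le_of_eq_of_le ?_ (Finset.prod_le_prod' hfactor)
  rw [← ENNReal.prod_inv_distrib fun i _ j _ _ ↦ .inr (by finiteness), Finset.prod_mul_distrib,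
    Finset.prod_const, ← pow_mul]

end BergmanKernel

/-! ### Tangential shifts on the torus -/

section TangentialPolydisc

variable {n : ℕ} {ζ z : Fin n → ℂ} {J : Finset (Fin n)} {t t' : Fin n → ℝ} {δ : ℝ}

/-- A polydisc of radius comparable to its distance to the torus point `ζ` in the coordinates of
`J`, and unrestricted in the other ones. Its centre is at depth `2 * δ` below `ζ`, shifted along
the torus by `-t j * δ` in the coordinate `j ∈ J`. -/
def tangentialPolydisc (ζ : Fin n → ℂ) (J : Finset (Fin n)) (t : Fin n → ℝ) (δ : ℝ) :
    Set (Fin n → ℂ) :=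
  univ.pi fun j ↦ if j ∈ J then ball (ζ j * (1 - 2 * δ - t j * δ * Complex.I)) δ else ball 0 1

lemma norm_sub_lt_of_mem_tangentialPolydisc (hz : z ∈ tangentialPolydisc ζ J t δ) {j : Fin n}
    (hj : j ∈ J) : ‖z j - ζ j * (1 - 2 * δ - t j * δ * Complex.I)‖ < δ := by
  simpa [hj, dist_eq_norm] using hz j (mem_univ j)

lemma measurableSet_tangentialPolydisc : MeasurableSet (tangentialPolydisc ζ J t δ) :=
  .univ_pi fun j ↦ by split_ifs <;> exact measurableSet_ball

lemma volume_tangentialPolydisc :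
    volume (tangentialPolydisc ζ J t δ) = ENNReal.ofReal δ ^ (2 * J.card) * NNReal.pi ^ n := by
  have hfactor (j : Fin n) :
      volume (if j ∈ J then ball (ζ j * (1 - 2 * δ - t j * δ * Complex.I)) δ else ball 0 1) =
        (if j ∈ J then ENNReal.ofReal δ ^ 2 else 1) * NNReal.pi := by
    split_ifs <;> simp
  rw [tangentialPolydisc, volume_pi_pi, Finset.prod_congr rfl fun j _ ↦ hfactor j,
    Finset.prod_mul_distrib, Finset.prod_ite_mem, Finset.univ_inter, Finset.prod_const,
    Finset.prod_const, Finset.card_fin, pow_mul]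

lemma norm_one_sub_two_mul_sub_mul_I_le {s : ℝ} (hδ : 0 < δ) (hs : δ * (3 + s ^ 2) ≤ 2) :
    ‖(1 : ℂ) - 2 * δ - s * δ * Complex.I‖ ≤ 1 - δ := by
  have hsplit : (1 : ℂ) - 2 * δ - s * δ * Complex.I =
      (1 - 2 * δ : ℝ) + (-(s * δ) : ℝ) * Complex.I := by push_cast; ring
  rw [hsplit, Complex.norm_add_mul_I, Real.sqrt_le_left (by nlinarith [sq_nonneg s])]
  nlinarith

lemma tangentialPolydisc_subset_polydisc (hζ : ζ ∈ torus n) (hδ : 0 < δ)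
    (ht : ∀ j, δ * (3 + t j ^ 2) ≤ 2) : tangentialPolydisc ζ J t δ ⊆ polydisc n := by
  intro z hz j
  by_cases hj : j ∈ J
  · have hcentre : ‖ζ j * (1 - 2 * δ - t j * δ * Complex.I)‖ ≤ 1 - δ := by
      rw [norm_mul, hζ j, one_mul]
      exact norm_one_sub_two_mul_sub_mul_I_le hδ (ht j)
    linarith [norm_sub_lt_of_mem_tangentialPolydisc hz hj,
      norm_le_norm_sub_add (z j) (ζ j * (1 - 2 * δ - t j * δ * Complex.I))]
  · simpa [hj] using hz j (mem_univ j)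

lemma disjoint_tangentialPolydisc (hζ : ζ ∈ torus n) (hδ : 0 < δ) {j : Fin n} (hj : j ∈ J)
    (ht : 2 ≤ |t j - t' j|) :
    Disjoint (tangentialPolydisc ζ J t δ) (tangentialPolydisc ζ J t' δ) := by
  refine Set.disjoint_univ_pi.2 ⟨j, ?_⟩
  rw [if_pos hj, if_pos hj]
  refine ball_disjoint_ball ?_
  have hcentres : ζ j * (1 - 2 * δ - t j * δ * Complex.I) -
      ζ j * (1 - 2 * δ - t' j * δ * Complex.I) =
        ζ j * (((t' j - t j : ℝ) : ℂ) * (δ * Complex.I)) := by push_cast; ring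
  rw [dist_eq_norm, hcentres, norm_mul, hζ j, one_mul, norm_mul, norm_mul, Complex.norm_I, mul_one,
    Complex.norm_real, Complex.norm_real, Real.norm_of_nonneg hδ.le, Real.norm_eq_abs,
    abs_sub_comm]
  nlinarith

lemma norm_sub_add_mul_I_le_of_mem_tangentialPolydisc (hζ : ζ ∈ torus n) (hδ : 0 < δ)
    (hz : z ∈ tangentialPolydisc ζ J t δ) {j : Fin n} (hj : j ∈ J) :
    ‖z j - ζ j + (t j * δ : ℝ) * ζ j * Complex.I‖ ≤ 3 * δ := by
  have hsplit : z j - ζ j + (t j * δ : ℝ) * ζ j * Complex.I =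
      (z j - ζ j * (1 - 2 * δ - t j * δ * Complex.I)) - 2 * δ * ζ j := by push_cast; ring
  have hdepth : ‖2 * δ * ζ j‖ = 2 * δ := by
    rw [norm_mul, norm_mul, hζ j, Complex.norm_real, Real.norm_of_nonneg hδ.le,
      Complex.norm_ofNat, mul_one]
  rw [hsplit]
  linarith [norm_sub_le (z j - ζ j * (1 - 2 * δ - t j * δ * Complex.I)) (2 * δ * ζ j),
    norm_sub_lt_of_mem_tangentialPolydisc hz hj]

lemma norm_sub_le_of_mem_tangentialPolydisc (hζ : ζ ∈ torus n) (hδ : 0 < δ)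
    (hz : z ∈ tangentialPolydisc ζ J t δ) {j : Fin n} (hj : j ∈ J) :
    ‖z j - ζ j‖ ≤ (‖t‖ + 3) * δ := by
  have hshift : ‖(t j * δ : ℝ) * ζ j * Complex.I‖ ≤ ‖t‖ * δ := by
    rw [norm_mul, norm_mul, hζ j, Complex.norm_I, Complex.norm_real, norm_mul,
      Real.norm_of_nonneg hδ.le, mul_one, mul_one]
    gcongr
    exact norm_le_pi_norm t j
  have htriangle := norm_sub_le (z j - ζ j + (t j * δ : ℝ) * ζ j * Complex.I)
    ((t j * δ : ℝ) * ζ j * Complex.I)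
  rw [add_sub_cancel_right] at htriangle
  linarith [norm_sub_add_mul_I_le_of_mem_tangentialPolydisc hζ hδ hz hj]

end TangentialPolydisc

namespace IsC1SelfMap

variable {n : ℕ} {φ : (Fin n → ℂ) → Fin n → ℂ} {ζ z : Fin n → ℂ} {i : Fin n}

-- The weights `s` drop out because `jacEntry n φ z i j * z j` is a fixed multiple of
-- `‖jacEntry n φ z i j‖`.
lemma norm_jacobian_mulVec_le (h : IsC1SelfMap φ) (hz : z ∈ closedPolydisc n) (hi : ‖φ z i‖ = 1)
    {y : Fin n → ℂ} {s : Fin n → ℝ} {r : ℝ} (hs : ∑ j, ‖jacEntry n φ z i j‖ * s j = 0)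
    (hy : ∀ j, jacEntry n φ z i j ≠ 0 → ‖y j + s j * z j * Complex.I‖ ≤ r) :
    ‖(jacobian φ z *ᵥ y) i‖ ≤ (∑ j, ‖jacEntry n φ z i j‖) * r := by
  have hshift : ∑ j, jacEntry n φ z i j * (s j * z j * Complex.I) = 0 := by
    calc _ = φ z i * Complex.I * (∑ j, ‖jacEntry n φ z i j‖ * s j : ℝ) := by
          push_cast
          rw [Finset.mul_sum]
          refine Finset.sum_congr rfl fun j _ ↦ ?_
          linear_combination s j * Complex.I * h.jacEntry_mul_eq hz hi j
      _ = 0 := by rw [hs, Complex.ofReal_zero, mul_zero]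
  calc ‖(jacobian φ z *ᵥ y) i‖
      = ‖∑ j, jacEntry n φ z i j * (y j + s j * z j * Complex.I)‖ := by
        simp only [jacobian_mulVec_apply, mul_add, Finset.sum_add_distrib, hshift, add_zero]
    _ ≤ ∑ j, ‖jacEntry n φ z i j‖ * r := by
        refine norm_sum_le_of_le _ fun j _ ↦ ?_
        rw [norm_mul]
        by_cases hj : jacEntry n φ z i j = 0
        · simp [hj]
        · gcongr
          exact hy j hj
    _ = _ := by rw [Finset.sum_mul]

lemma eventually_norm_sub_le_of_mem_tangentialPolydisc (h : IsC1SelfMap φ) (hζ : ζ ∈ torus n)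
    {J : Finset (Fin n)} (hi : ‖φ ζ i‖ = 1) (hJ : ∀ j ∉ J, jacEntry n φ ζ i j = 0) {t : Fin n → ℝ}
    (ht : ∑ j, ‖jacEntry n φ ζ i j‖ * t j = 0) :
    ∀ᶠ δ in 𝓝[>] (0 : ℝ), ∀ z ∈ polydisc n, z ∈ tangentialPolydisc ζ J t δ →
      ‖φ z i - φ ζ i‖ ≤ (3 * ∑ j, ‖jacEntry n φ ζ i j‖ + 1) * δ := by
  have hQ : 0 < ‖t‖ + 3 := by positivity
  obtain ⟨δ₀, hδ₀, H⟩ := h.exists_norm_sub_sub_mulVec_le (inv_pos.2 hQ)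
  filter_upwards [Ioo_mem_nhdsGT (div_pos hδ₀ hQ)] with δ ⟨hδ, hδlt⟩ z hzP hz
  obtain ⟨hx, hrigid⟩ := h.piecewise_apply_eq (torus_subset_closedPolydisc hζ)
    (polydisc_subset_closedPolydisc hzP) Jᶜ
  obtain ⟨hφx, hJx⟩ := hrigid i hi fun j hj ↦ hJ j (Finset.mem_compl.1 hj)
  set x := Jᶜ.piecewise z ζ with hxdef
  have hxJ {j} (hj : j ∈ J) : x j = ζ j := by simp [hxdef, hj]
  have hdist : ‖z - x‖ ≤ (‖t‖ + 3) * δ := by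
    refine (pi_norm_le_iff_of_nonneg (by positivity)).2 fun j ↦ ?_
    by_cases hj : j ∈ J
    · rw [Pi.sub_apply, hxJ hj]
      exact norm_sub_le_of_mem_tangentialPolydisc hζ hδ hz hj
    · simpa [hxdef, hj] using by positivity
  have hlinear : ‖(jacobian φ x *ᵥ (z - x)) i‖ ≤ (∑ j, ‖jacEntry n φ ζ i j‖) * (3 * δ) := by
    simp only [← hJx]
    refine h.norm_jacobian_mulVec_le hx (hφx ▸ hi) (s := fun j ↦ t j * δ) ?_ fun j hj ↦ ?_
    · simp only [hJx, ← mul_assoc, ← Finset.sum_mul, ht, zero_mul]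
    · have hjJ : j ∈ J := by
        contrapose! hj
        rw [hJx, hJ j hj]
      rw [Pi.sub_apply, hxJ hjJ]
      exact norm_sub_add_mul_I_le_of_mem_tangentialPolydisc hζ hδ hz hjJ
  have herror : ‖φ z i - φ ζ i - (jacobian φ x *ᵥ (z - x)) i‖ ≤ δ := by
    rw [← hφx]
    refine (H x hx z (polydisc_subset_closedPolydisc hzP) (hdist.trans_lt ?_) i).trans ?_
    · rwa [mul_comm, ← lt_div_iff₀ hQ]
    · rwa [inv_mul_le_iff₀ hQ]
  linarith [norm_le_norm_sub_add (φ z i - φ ζ i) ((jacobian φ x *ᵥ (z - x)) i)]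

end IsC1SelfMap

/-! ### Necessity -/

lemma card_mul_le_setLIntegral {α ι : Type*} [MeasurableSpace α] {μ : Measure α} {s : Finset ι}
    {E : ι → Set α} {P : Set α} {g : α → ℝ≥0∞} {a v : ℝ≥0∞} (hE : ∀ m ∈ s, MeasurableSet (E m))
    (hd : (s : Set ι).PairwiseDisjoint E) (hP : ∀ m ∈ s, E m ⊆ P) (hv : ∀ m ∈ s, v ≤ μ (E m))
    (ha : ∀ m ∈ s, ∀ z ∈ E m, a ≤ g z) : s.card * (a * v) ≤ ∫⁻ z in P, g z ∂μ :=
  calc s.card * (a * v) = ∑ _m ∈ s, a * v := by rw [Finset.sum_const, nsmul_eq_mul]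
    _ ≤ ∑ m ∈ s, ∫⁻ z in E m, g z ∂μ := by
      refine Finset.sum_le_sum fun m hm ↦ ?_
      calc a * v ≤ a * μ (E m) := by gcongr; exact hv m hm
        _ = ∫⁻ _ in E m, a ∂μ := (setLIntegral_const _ _).symm
        _ ≤ _ := setLIntegral_mono' (hE m hm) (ha m hm)
    _ = ∫⁻ z in ⋃ m ∈ s, E m, g z ∂μ := (lintegral_biUnion_finset hd hE g).symm
    _ ≤ _ := lintegral_mono_set (iUnion₂_subset hP)

lemma eventually_tangentialPolydisc_subset_polydisc {n : ℕ} {ζ : Fin n → ℂ} (hζ : ζ ∈ torus n)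
    (J : Finset (Fin n)) (t : Fin n → ℝ) :
    ∀ᶠ δ in 𝓝[>] (0 : ℝ), tangentialPolydisc ζ J t δ ⊆ polydisc n := by
  have hsmall (j : Fin n) : ∀ᶠ δ in 𝓝[>] (0 : ℝ), δ * (3 + t j ^ 2) ≤ 2 := by
    have hpos : 0 < 3 + t j ^ 2 := by positivity
    filter_upwards [Ioo_mem_nhdsGT (div_pos two_pos hpos)] with δ hδ
    exact ((lt_div_iff₀ hpos).1 hδ.2).le
  filter_upwards [self_mem_nhdsWithin, eventually_all.2 hsmall] with δ hδ ht
  exact tangentialPolydisc_subset_polydisc hζ hδ ht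

lemma le_mul_of_mul_inv_sq_mul_mul_le {N C P e V : ℝ≥0∞} (he : e ≠ 0) (he' : e ≠ ⊤) (hP : P ≠ 0)
    (hP' : P ≠ ⊤) (hV : V ≠ 0) (hV' : V ≠ ⊤)
    (hle : N * ((e ^ 2 * P)⁻¹ * (e * V)) ≤ C * (V * e⁻¹)) : N ≤ C * P := by
  have hcancel : (e ^ 2 * P)⁻¹ * (e * V) = P⁻¹ * (V * e⁻¹) := by
    rw [ENNReal.mul_inv (.inr hP') (.inr hP), sq, ENNReal.mul_inv (.inl he) (.inl he')]
    calc _ = P⁻¹ * (V * e⁻¹) * (e⁻¹ * e) := by ring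
      _ = _ := by rw [ENNReal.inv_mul_cancel he he', mul_one]
  rw [hcancel, ← mul_assoc, ENNReal.mul_le_mul_iff_left
    (mul_ne_zero hV (ENNReal.inv_ne_zero.2 he')) (by finiteness), ← div_eq_mul_inv] at hle
  exact (ENNReal.div_le_iff hP hP').1 hle

lemma card_le_of_forall_setLIntegral_le {n : ℕ} {φ : (Fin n → ℂ) → Fin n → ℂ} {C : ℝ≥0∞}
    (hm : MapsTo φ (polydisc n) (polydisc n))
    (hC : ∀ f : (Fin n → ℂ) → ℂ, DifferentiableOn ℂ f (polydisc n) →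
      ∫⁻ z in polydisc n, ‖f (φ z)‖ₑ ^ 2 ≤ C * ∫⁻ z in polydisc n, ‖f z‖ₑ ^ 2)
    {I : Finset (Fin n)} {p : Fin n → ℂ} (hp : ∀ i ∈ I, ‖p i‖ = 1) {δ : ℝ} (hδ : 0 < δ)
    (hδ1 : δ ≤ 1) {ι : Type*} {s : Finset ι} {E : ι → Set (Fin n → ℂ)}
    (hE : ∀ m ∈ s, MeasurableSet (E m)) (hd : (s : Set ι).PairwiseDisjoint E)
    (hP : ∀ m ∈ s, E m ⊆ polydisc n)
    (hvol : ∀ m ∈ s, ENNReal.ofReal δ ^ (2 * I.card) * NNReal.pi ^ n ≤ volume (E m))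
    {D : Fin n → ℝ} (hD0 : ∀ i ∈ I, 0 ≤ D i)
    (hD : ∀ m ∈ s, ∀ z ∈ E m, ∀ i ∈ I, ‖φ z i - p i‖ ≤ D i * δ) :
    s.card ≤ C * ∏ i ∈ I, ENNReal.ofReal (1 + D i) ^ 4 := by
  have hlower := card_mul_le_setLIntegral hE hd hP hvol fun m hm' z hz ↦
    inv_le_enorm_partialBergmanKernel_smul_sq hp hδ hδ1 (fun i _ ↦ (hm (hP m hm' hz) i).le)
      (hD m hm' z hz)
  have hdiff : DifferentiableOn ℂ (partialBergmanKernel I ((1 - δ) • p)) (polydisc n) :=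
    differentiableOn_partialBergmanKernel fun i hi ↦ by
      rw [Pi.smul_apply, norm_one_sub_smul_of_norm_eq_one (hp i hi) hδ1]
      linarith
  have hupper := (hC _ hdiff).trans
    (mul_le_mul_right (setLIntegral_enorm_partialBergmanKernel_smul_sq_le hp hδ hδ1) C)
  rw [show 4 * I.card = 2 * I.card * 2 by ring, pow_mul] at hlower
  refine le_mul_of_mul_inv_sq_mul_mul_le ?_ (by finiteness) ?_ ?_ ?_ (by finiteness)
    (hlower.trans hupper)
  · exact pow_ne_zero _ (ENNReal.ofReal_pos.2 hδ).ne'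
  · exact Finset.prod_ne_zero_iff.2 fun i hi ↦
      pow_ne_zero 4 (ENNReal.ofReal_pos.2 (by linarith [hD0 i hi])).ne'
  · exact ENNReal.prod_ne_top fun i _ ↦ by finiteness
  · exact pow_ne_zero n (ENNReal.coe_ne_zero.2 NNReal.pi_ne_zero)

namespace IsC1SelfMap

variable {n : ℕ} {φ : (Fin n → ℂ) → Fin n → ℂ} {ζ : Fin n → ℂ} {I J : Finset (Fin n)}
  {v : Fin n → ℝ}

lemma eventually_forall_shift (h : IsC1SelfMap φ) (hζ : ζ ∈ torus n) (hI : ∀ i ∈ I, ‖φ ζ i‖ = 1)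
    (hJ : ∀ i ∈ I, ∀ j ∉ J, jacEntry n φ ζ i j = 0)
    (hv : ∀ i ∈ I, ∑ j, ‖jacEntry n φ ζ i j‖ * v j = 0) (N : ℕ) :
    ∀ᶠ δ in 𝓝[>] (0 : ℝ), ∀ m ∈ Finset.range N,
      tangentialPolydisc ζ J ((m : ℝ) • v) δ ⊆ polydisc n ∧
        ∀ i ∈ I, ∀ z ∈ tangentialPolydisc ζ J ((m : ℝ) • v) δ,
          ‖φ z i - φ ζ i‖ ≤ (3 * ∑ j, ‖jacEntry n φ ζ i j‖ + 1) * δ := by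
  refine (eventually_all_finset _).2 fun m _ ↦ ?_
  have hclose : ∀ᶠ δ in 𝓝[>] (0 : ℝ), ∀ i ∈ I, ∀ z ∈ polydisc n,
      z ∈ tangentialPolydisc ζ J ((m : ℝ) • v) δ →
        ‖φ z i - φ ζ i‖ ≤ (3 * ∑ j, ‖jacEntry n φ ζ i j‖ + 1) * δ := by
    refine (eventually_all_finset _).2 fun i hi ↦
      h.eventually_norm_sub_le_of_mem_tangentialPolydisc hζ (hI i hi) (hJ i hi) ?_
    simp only [Pi.smul_apply, smul_eq_mul, mul_left_comm _ (m : ℝ), ← Finset.mul_sum, hv i hi,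
      mul_zero]
  filter_upwards [eventually_tangentialPolydisc_subset_polydisc hζ J _, hclose] with δ hsub hδ
  exact ⟨hsub, fun i hi z hz ↦ hδ i hi z (hsub hz) hz⟩

lemma natCast_le_of_forall_setLIntegral_le (h : IsC1SelfMap φ) {C : ℝ≥0∞}
    (hC : ∀ f : (Fin n → ℂ) → ℂ, DifferentiableOn ℂ f (polydisc n) →
      ∫⁻ z in polydisc n, ‖f (φ z)‖ₑ ^ 2 ≤ C * ∫⁻ z in polydisc n, ‖f z‖ₑ ^ 2)
    (hζ : ζ ∈ torus n) (hI : ∀ i ∈ I, ‖φ ζ i‖ = 1)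
    (hJ : ∀ i ∈ I, ∀ j ∉ J, jacEntry n φ ζ i j = 0) (hcard : J.card ≤ I.card)
    (hv : ∀ i ∈ I, ∑ j, ‖jacEntry n φ ζ i j‖ * v j = 0) {k : Fin n} (hk : k ∈ J)
    (hvk : 2 ≤ |v k|) (N : ℕ) :
    N ≤ C * ∏ i ∈ I, ENNReal.ofReal (1 + (3 * ∑ j, ‖jacEntry n φ ζ i j‖ + 1)) ^ 4 := by
  obtain ⟨δ, hshift, hδ, hδ1⟩ := ((h.eventually_forall_shift hζ hI hJ hv N).and
    (Ioc_mem_nhdsGT one_pos)).exists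
  have hdisj : (Finset.range N : Set ℕ).PairwiseDisjoint
      fun m ↦ tangentialPolydisc ζ J ((m : ℝ) • v) δ := by
    intro m _ m' _ hmm
    refine disjoint_tangentialPolydisc hζ hδ hk ?_
    have hone : (1 : ℝ) ≤ |(m : ℝ) - m'| := by
      exact_mod_cast Int.one_le_abs (sub_ne_zero.2 (Nat.cast_injective.ne hmm))
    rw [Pi.smul_apply, Pi.smul_apply, smul_eq_mul, smul_eq_mul, ← sub_mul, abs_mul]
    nlinarith
  have hvol (m) : ENNReal.ofReal δ ^ (2 * I.card) * NNReal.pi ^ n ≤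
      volume (tangentialPolydisc ζ J ((m : ℝ) • v) δ) := by
    rw [volume_tangentialPolydisc]
    gcongr ?_ * _
    exact pow_le_pow_of_le_one zero_le (ENNReal.ofReal_le_one.2 hδ1) (by lia)
  simpa only [Finset.card_range] using card_le_of_forall_setLIntegral_le h.mapsTo hC hI hδ hδ1
    (fun m _ ↦ measurableSet_tangentialPolydisc) hdisj (fun m hm ↦ (hshift m hm).1)
    (fun m _ ↦ hvol m) (fun i _ ↦ by positivity)
    fun m hm z hz i hi ↦ (hshift m hm).2 i hi z hz

theorem eq_zero_of_bddBergman (h : IsC1SelfMap φ) (hb : bddBergman n 0 φ) (hζ : ζ ∈ torus n)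
    (hI : ∀ i ∈ I, ‖φ ζ i‖ = 1) (hJ : ∀ i ∈ I, ∀ j ∉ J, jacEntry n φ ζ i j = 0)
    (hcard : J.card ≤ I.card) (hv : ∀ i ∈ I, ∑ j, ‖jacEntry n φ ζ i j‖ * v j = 0) {k : Fin n}
    (hk : k ∈ J) : v k = 0 := by
  by_contra hvk
  obtain ⟨C, hCtop, hC⟩ := bddBergman_zero_iff.1 hb
  have hfinite : C * ∏ i ∈ I, ENNReal.ofReal (1 + (3 * ∑ j, ‖jacEntry n φ ζ i j‖ + 1)) ^ 4 ≠ ⊤ :=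
    ENNReal.mul_ne_top hCtop (ENNReal.prod_ne_top fun i _ ↦ by finiteness)
  obtain ⟨N, hN⟩ := ENNReal.exists_nat_gt hfinite
  refine hN.not_ge (h.natCast_le_of_forall_setLIntegral_le hC hζ hI hJ hcard
    (v := (2 / v k) • v) (fun i hi ↦ ?_) hk ?_ N)
  · simp only [Pi.smul_apply, smul_eq_mul, mul_left_comm _ (2 / v k), ← Finset.mul_sum, hv i hi,
      mul_zero]
  · simp [hvk]

theorem det_jacobian_ne_zero_of_bddBergman (h : IsC1SelfMap φ) (hb : bddBergman n 0 φ)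
    (hζ : ζ ∈ torus n) (hφ : φ ζ ∈ torus n) : (jacobian φ ζ).det ≠ 0 := by
  set A : Matrix (Fin n) (Fin n) ℝ := .of fun i j ↦ ‖jacEntry n φ ζ i j‖
  have hdet : A.det ≠ 0 := by
    refine fun h0 ↦ ?_
    obtain ⟨v, hv, hAv⟩ := exists_mulVec_eq_zero_iff.2 h0
    exact hv <| funext fun k ↦ h.eq_zero_of_bddBergman (I := .univ) (J := .univ) hb hζ
      (fun i _ ↦ hφ i) (by simp) le_rfl (fun i _ ↦ congrFun hAv i) (Finset.mem_univ k)
  have hfactor : jacobian φ ζ * diagonal ζ = diagonal (φ ζ) * A.map Complex.ofRealHom := by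
    ext i j
    rw [mul_diagonal, diagonal_mul]
    exact h.jacEntry_mul_eq (torus_subset_closedPolydisc hζ) (hφ i) j
  intro h0
  have hprod := congrArg Matrix.det hfactor
  rw [det_mul, h0, zero_mul, det_mul, det_diagonal, ← RingHom.mapMatrix_apply,
    ← RingHom.map_det] at hprod
  refine mul_ne_zero (Finset.prod_ne_zero_iff.2 fun i _ ↦ ?_) (Complex.ofReal_ne_zero.2 hdet)
    hprod.symm
  exact norm_ne_zero_iff.1 (by simp [hφ i])

theorem linearIndependent_pair_of_bddBergman (h : IsC1SelfMap φ) (hb : bddBergman n 0 φ)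
    (hζ : ζ ∈ torus n) {i₁ i₂ k l : Fin n} (hi : i₁ ≠ i₂) (h₁ : ‖φ ζ i₁‖ = 1) (h₂ : ‖φ ζ i₂‖ = 1)
    (hkl : k ≠ l) (hJ : ∀ j ∉ ({k, l} : Finset (Fin n)), jacEntry n φ ζ i₁ j = 0) :
    LinearIndependent ℂ ![jacEntry n φ ζ i₁, jacEntry n φ ζ i₂] := by
  obtain ⟨m, hm⟩ := h.exists_jacEntry_ne_zero (torus_subset_closedPolydisc hζ) h₁
  refine (LinearIndependent.pair_iff' (ne_of_apply_ne (· m) hm)).2 fun s hs ↦ ?_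
  have hrow (j) : jacEntry n φ ζ i₂ j = s * jacEntry n φ ζ i₁ j := (congrFun hs j).symm
  set v : Fin n → ℝ :=
    Pi.single k ‖jacEntry n φ ζ i₁ l‖ - Pi.single l ‖jacEntry n φ ζ i₁ k‖ with hv
  have hker : ∑ j, ‖jacEntry n φ ζ i₁ j‖ * v j = 0 := by
    simp only [hv, Pi.sub_apply, mul_sub, Finset.sum_sub_distrib, Pi.single_apply, mul_ite,
      mul_zero, Finset.sum_ite_eq', Finset.mem_univ, if_true]
    ring
  have hzero {j} (hj : j ∈ ({k, l} : Finset (Fin n))) : v j = 0 := by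
    refine h.eq_zero_of_bddBergman (I := {i₁, i₂}) hb hζ ?_ ?_ ?_ ?_ hj
    · simp [h₁, h₂]
    · simp only [Finset.forall_mem_insert, Finset.mem_singleton, forall_eq]
      exact ⟨hJ, fun j hj ↦ by rw [hrow, hJ j hj, mul_zero]⟩
    · rw [Finset.card_pair hkl, Finset.card_pair hi]
    · simp [hrow, mul_assoc, ← Finset.mul_sum, hker]
  have hk : jacEntry n φ ζ i₁ k = 0 := by simpa [hv, hkl.symm] using hzero (j := l)
  have hl : jacEntry n φ ζ i₁ l = 0 := by simpa [hv, hkl] using hzero (j := k)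
  have hmJ : m ∈ ({k, l} : Finset (Fin n)) := by
    contrapose! hm
    exact hJ m hm
  rcases Finset.mem_insert.1 hmJ with rfl | hml
  · exact hm hk
  · exact hm (Finset.mem_singleton.1 hml ▸ hl)

theorem linearIndependent_or_jacEntry_ne_zero_of_bddBergman {φ : (Fin 3 → ℂ) → Fin 3 → ℂ}
    (h : IsC1SelfMap φ) (hb : bddBergman 3 0 φ) {ζ : Fin 3 → ℂ} (hζ : ζ ∈ torus 3)
    {i₁ i₂ : Fin 3} (hi : i₁ ≠ i₂) (h₁ : ‖φ ζ i₁‖ = 1) (h₂ : ‖φ ζ i₂‖ = 1) :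
    LinearIndependent ℂ ![jacEntry 3 φ ζ i₁, jacEntry 3 φ ζ i₂] ∨
      ∀ j, jacEntry 3 φ ζ i₁ j ≠ 0 ∧ jacEntry 3 φ ζ i₂ j ≠ 0 := by
  by_contra! ⟨hdep, j, hj⟩
  obtain ⟨k, l, hkl, hkl'⟩ := Finset.card_eq_two.1
    (show ((Finset.univ : Finset (Fin 3)).erase j).card = 2 by simp)
  have hmem (m) (hm : m ∉ ({k, l} : Finset (Fin 3))) : m = j := by
    simpa [← hkl'] using hm
  by_cases hj₁ : jacEntry 3 φ ζ i₁ j = 0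
  · exact hdep <| h.linearIndependent_pair_of_bddBergman hb hζ hi h₁ h₂ hkl
      fun m hm ↦ hmem m hm ▸ hj₁
  · exact hdep <| LinearIndependent.pair_symm_iff.1 <|
      h.linearIndependent_pair_of_bddBergman hb hζ hi.symm h₂ h₁ hkl
        fun m hm ↦ hmem m hm ▸ hj hj₁

end IsC1SelfMap

theorem tridisc_bergman_criterion_general (φ : (Fin 3 → ℂ) → (Fin 3 → ℂ))
    (hhol : DifferentiableOn ℂ φ (polydisc 3))
    (hsm : ContDiffOn ℝ 1 φ (closedPolydisc 3))
    (hmap : ∀ z ∈ polydisc 3, φ z ∈ polydisc 3) :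
    bddBergman 3 0 φ ↔
      ((∀ ζ ∈ torus 3, φ ζ ∈ torus 3 →
          Matrix.det (Matrix.of fun i j ↦ jacEntry 3 φ ζ i j) ≠ 0) ∧
        (∀ i₁ i₂ : Fin 3, i₁ < i₂ → ∀ ζ ∈ torus 3, ‖φ ζ i₁‖ = 1 → ‖φ ζ i₂‖ = 1 →
          (LinearIndependent ℂ
              ![fun j ↦ jacEntry 3 φ ζ i₁ j, fun j ↦ jacEntry 3 φ ζ i₂ j] ∨
            ∀ j : Fin 3, jacEntry 3 φ ζ i₁ j ≠ 0 ∧ jacEntry 3 φ ζ i₂ j ≠ 0))) := by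
  have h : IsC1SelfMap φ := ⟨hhol, hsm, hmap⟩
  refine ⟨fun hb ↦ ⟨fun ζ hζ hφ ↦ h.det_jacobian_ne_zero_of_bddBergman hb hζ hφ,
    fun i₁ i₂ hi ζ hζ h₁ h₂ ↦
      h.linearIndependent_or_jacEntry_ne_zero_of_bddBergman hb hζ hi.ne h₁ h₂⟩, ?_⟩
  rintro ⟨hdet, hpair⟩
  have hCarleson : IsCarlesonOn φ (closedPolydisc 3) := h.isCarlesonOn_closedPolydisc
    fun ζ hζ I hI ↦ h.linearIndepOn_or_jacEntry_ne_zero hdet hpair hζ I hI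
  exact (hCarleson.mono polydisc_subset_closedPolydisc).bddBergman
    (h.continuousOn.mono polydisc_subset_closedPolydisc) h.mapsTo

theorem tridisc_bergman_criterion (φ : (Fin 3 → ℂ) → (Fin 3 → ℂ))
    (hhol : DifferentiableOn ℂ φ (polydisc 3))
    (hsm : ContDiffOn ℝ 2 φ (closedPolydisc 3))
    (hmap : ∀ z ∈ polydisc 3, φ z ∈ polydisc 3) :
    bddBergman 3 0 φ ↔
      ((∀ ζ ∈ torus 3, φ ζ ∈ torus 3 →
          Matrix.det (Matrix.of fun i j => jacEntry 3 φ ζ i j) ≠ 0) ∧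
        (∀ i₁ i₂ : Fin 3, i₁ < i₂ → ∀ ζ ∈ torus 3, ‖φ ζ i₁‖ = 1 → ‖φ ζ i₂‖ = 1 →
          (LinearIndependent ℂ
              ![fun j => jacEntry 3 φ ζ i₁ j, fun j => jacEntry 3 φ ζ i₂ j] ∨
            ∀ j : Fin 3, jacEntry 3 φ ζ i₁ j ≠ 0 ∧ jacEntry 3 φ ζ i₂ j ≠ 0))) :=
  tridisc_bergman_criterion_general φ hhol (hsm.of_le one_le_two) hmap

end
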